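/- arXiv:1704.07717 — 4 statements merged into one kernel-verified Lean document; each statement's English description precedes it below -/
import Mathlib

section
/- Let (X,d,μ) be a metric measure space such that (X,d) is locally compact and μ is a strictly positive Radon measure. If (X,d,μ) satisfies BM(p) for some p>0, then it satisfies the general inequality B̄M(p). -/
open MeasureTheory Set Metric Filter
open scoped ENNReal NNReal Topology Pointwise

noncomputable section

/-- The `d`-convex combination `(1-λ)A ⋆_d λB` of two sets. -/
def starComb {Z : Type*} (d : Z → Z → ℝ) (lam : ℝ) (A B : Set Z) : Set Z :=
  {z | ∃ a ∈ A, ∃ b ∈ B, d z a = lam * d a b ∧ d z b = (1 - lam) * d a b}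

/-- A distance is strictly intrinsic: closed balls of radii summing to the distance
between their centers intersect. -/
def StrictlyIntrinsicDist {Z : Type*} (d : Z → Z → ℝ) : Prop :=
  ∀ x y : Z, ∀ r₁ r₂ : ℝ, 0 ≤ r₁ → 0 ≤ r₂ → r₁ + r₂ = d x y →
    ∃ z : Z, d z x ≤ r₁ ∧ d z y ≤ r₂

/-- The ℓ² (Euclidean) product metric on `X × Y`. -/
def rho {X Y : Type*} [PseudoMetricSpace X] [PseudoMetricSpace Y] (a b : X × Y) : ℝ :=
  Real.sqrt (dist a.1 b.1 ^ 2 + dist a.2 b.2 ^ 2)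

/-- The ℓ² (Euclidean) metric on a finite product of copies of a metric space. -/
def rhoPi {ι : Type*} [Fintype ι] {X : Type*} [PseudoMetricSpace X] (a b : ι → X) : ℝ :=
  Real.sqrt (∑ i, dist (a i) (b i) ^ 2)

open Classical in
/-- The `p`-th mean `M_p(a,b,λ)` of `a, b ∈ [0,∞]`, for `p ∈ ℝ ∪ {±∞}`, with the
convention that it vanishes whenever `a * b = 0`. -/
def Mp (p : EReal) (lam : ℝ) (a b : ℝ≥0∞) : ℝ≥0∞ :=
  if a = 0 ∨ b = 0 then 0
  else if p = ⊤ then max a b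
  else if p = ⊥ then min a b
  else if p = 0 then a ^ (1 - lam) * b ^ lam
  else (ENNReal.ofReal (1 - lam) * a ^ p.toReal + ENNReal.ofReal lam * b ^ p.toReal) ^ (1 / p.toReal)

open Classical in
/-- The `p`-th mean `M_p(a,b,λ)` of nonnegative reals, with the zero convention. -/
def MpR (p : EReal) (lam a b : ℝ) : ℝ :=
  if a = 0 ∨ b = 0 then 0
  else if p = ⊤ then max a b
  else if p = ⊥ then min a b
  else if p = 0 then a ^ (1 - lam) * b ^ lam
  else ((1 - lam) * a ^ p.toReal + lam * b ^ p.toReal) ^ (1 / p.toReal)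

/-- `(X,d,μ)` satisfies `BM(p)`. -/
def SatisfiesBM {X : Type*} [MeasurableSpace X] (d : X → X → ℝ) (μ : Measure X)
    (p : EReal) : Prop :=
  ∀ lam : ℝ, lam ∈ Ioo (0:ℝ) 1 → ∀ A B C : Set X, A.Nonempty → B.Nonempty →
    MeasurableSet A → MeasurableSet B → MeasurableSet C →
    μ A ≠ 0 → μ B ≠ 0 → starComb d lam A B ⊆ C →
    Mp p lam (μ A) (μ B) ≤ μ C

/-- `(X,d,μ)` satisfies the general (linear) inequality `B̄M(1)`:
`μ(C) ≥ (1-λ)μ(A) + λμ(B)` for all nonempty measurable `A, B, C` with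
`C ⊇ (1-λ)A ⋆ λB`. -/
def SatisfiesBMbarLinear {X : Type*} [MeasurableSpace X] (d : X → X → ℝ)
    (μ : Measure X) : Prop :=
  ∀ lam : ℝ, lam ∈ Ioo (0:ℝ) 1 → ∀ A B C : Set X, A.Nonempty → B.Nonempty →
    MeasurableSet A → MeasurableSet B → MeasurableSet C →
    starComb d lam A B ⊆ C →
    ENNReal.ofReal (1 - lam) * μ A + ENNReal.ofReal lam * μ B ≤ μ C

/-- `(X,d,μ)` satisfies the general inequality `B̄M(p)` for a real `p > 0`:
`μ(C) ≥ ((1-λ)μ(A)^p + λμ(B)^p)^{1/p}` for all nonempty measurable `A, B, C`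
with `C ⊇ (1-λ)A ⋆ λB`. -/
def SatisfiesBMbarPos {X : Type*} [MeasurableSpace X] (d : X → X → ℝ) (μ : Measure X)
    (p : ℝ) : Prop :=
  ∀ lam : ℝ, lam ∈ Ioo (0:ℝ) 1 → ∀ A B C : Set X, A.Nonempty → B.Nonempty →
    MeasurableSet A → MeasurableSet B → MeasurableSet C →
    starComb d lam A B ⊆ C →
    (ENNReal.ofReal (1 - lam) * μ A ^ p + ENNReal.ofReal lam * μ B ^ p) ^ (1/p) ≤ μ C

/-- `(X,d,μ)` satisfies the weighted inequality `BM(p,q)`: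
`μ(C)^p ≥ (1-λ)^q μ(A)^p + λ^q μ(B)^p` for all nonempty measurable sets of positive
measure with `C ⊇ (1-λ)A ⋆ λB`. -/
def SatisfiesBMW {X : Type*} [MeasurableSpace X] (d : X → X → ℝ) (μ : Measure X)
    (p q : ℝ) : Prop :=
  ∀ lam : ℝ, lam ∈ Ioo (0:ℝ) 1 → ∀ A B C : Set X, A.Nonempty → B.Nonempty →
    MeasurableSet A → MeasurableSet B → MeasurableSet C →
    μ A ≠ 0 → μ B ≠ 0 → starComb d lam A B ⊆ C →
    ENNReal.ofReal ((1 - lam) ^ q) * μ A ^ p + ENNReal.ofReal (lam ^ q) * μ B ^ p ≤ μ C ^ p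

/-- `(X,d,μ)` satisfies the Prékopa–Leindler inequality `PL`. -/
def SatisfiesPL {X : Type*} [MeasurableSpace X] (d : X → X → ℝ) (μ : Measure X) : Prop :=
  ∀ lam : ℝ, lam ∈ Ioo (0:ℝ) 1 → ∀ f g h : X → ℝ≥0∞,
    Measurable f → Measurable g → Measurable h →
    (∀ x y z : X, d z x = lam * d x y → d z y = (1 - lam) * d x y →
      f x ^ (1 - lam) * g y ^ lam ≤ h z) →
    (∫⁻ x, f x ∂μ) ^ (1 - lam) * (∫⁻ x, g x ∂μ) ^ lam ≤ ∫⁻ x, h x ∂μ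

open Classical in
/-- `(X,d,μ)` satisfies the Borell–Brascamp–Lieb inequality `BBL(p,m)`. -/
def SatisfiesBBL {X : Type*} [MeasurableSpace X] (d : X → X → ℝ) (μ : Measure X)
    (p m : ℝ) : Prop :=
  ∀ lam : ℝ, lam ∈ Ioo (0:ℝ) 1 → ∀ f g h : X → ℝ≥0∞,
    Measurable f → Measurable g → Measurable h →
    (∀ x y z : X, d z x = lam * d x y → d z y = (1 - lam) * d x y →
      Mp (p : EReal) lam (f x) (g y) ≤ h z) →
    Mp (if m * p + 1 = 0 then (⊥ : EReal) else ((p / (m * p + 1) : ℝ) : EReal)) lam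
      (∫⁻ x, f x ∂μ) (∫⁻ x, g x ∂μ) ≤ ∫⁻ x, h x ∂μ

/-- `φ : ℝ → ℝ` is positively decreasing: `t ↦ φ(t)` and `t ↦ φ(-t)` are
non-increasing on `[0,∞)`. -/
def PositivelyDecreasing (φ : ℝ → ℝ) : Prop :=
  (∀ s t : ℝ, 0 ≤ s → s ≤ t → φ t ≤ φ s) ∧ (∀ s t : ℝ, 0 ≤ s → s ≤ t → φ (-t) ≤ φ (-s))

/-- A set `A ⊆ ℝⁿ` is weakly unconditional. -/
def WeaklyUnconditional {n : ℕ} (A : Set (Fin n → ℝ)) : Prop :=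
  ∀ x ∈ A, ∀ ε : Fin n → ℝ, (∀ i, ε i = 0 ∨ ε i = 1) → (fun i => ε i * x i) ∈ A

/-- A nonnegative function on a real vector space is `p`-concave. -/
def PConcaveFn {E : Type*} [AddCommGroup E] [Module ℝ E] (p : EReal) (φ : E → ℝ) : Prop :=
  ∀ x y : E, ∀ lam : ℝ, lam ∈ Ioo (0:ℝ) 1 →
    MpR p lam (φ x) (φ y) ≤ φ ((1 - lam) • x + lam • y)

/-- A function on a real vector space is radially decreasing. -/
def RadiallyDecreasing {E : Type*} [AddCommGroup E] [Module ℝ E] (φ : E → ℝ) : Prop :=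
  ∀ x : E, ∀ t : ℝ, t ∈ Icc (0:ℝ) 1 → φ x ≤ φ (t • x)

/-!
Only the case where one of the sets, say `B`, is null needs an argument. Fix `b ∈ B`, and let `A` be
compact, which suffices by inner regularity. Since `μ` is strictly positive, `BM(p)` applies to `A`
and `closedBall b r` for every `r > 0`, and dropping the term of the ball bounds the measure of the
closure of their combination below by `(1 - λ)^(1/p) μ(A)`. As `r → 0` these closures decrease into
`(1 - λ)A ⋆ λ{b}`, because `A` is compact.

Continuity of `μ` from above requires the closures to have finite measure. This follows from `BM(p)`
as well: with `λ` close to `1`, the combination of a large ball with a small concentric one lies in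
a ball on which `μ` is finite.
-/

section Mean

variable {p : ℝ}

theorem mul_rpow_rpow_one_div (hp : 0 < p) (c a : ℝ≥0∞) :
    (c * a ^ p) ^ (1 / p) = c ^ (1 / p) * a := by
  rw [ENNReal.mul_rpow_of_nonneg _ _ (by positivity), one_div, ENNReal.rpow_rpow_inv hp.ne']

theorem Mp_coe_of_ne_zero (hp : p ≠ 0) (lam : ℝ) {a b : ℝ≥0∞} (ha : a ≠ 0) (hb : b ≠ 0) :
    Mp p lam a b =
      (ENNReal.ofReal (1 - lam) * a ^ p + ENNReal.ofReal lam * b ^ p) ^ (1 / p) := by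
  simp [Mp, ha, hb, hp]

theorem rpow_one_div_mul_le_Mp (hp : 0 < p) (lam : ℝ) (a : ℝ≥0∞) {b : ℝ≥0∞} (hb : b ≠ 0) :
    ENNReal.ofReal (1 - lam) ^ (1 / p) * a ≤ Mp p lam a b := by
  rcases eq_or_ne a 0 with rfl | ha
  · simp
  · rw [Mp_coe_of_ne_zero hp.ne' lam ha hb, ← mul_rpow_rpow_one_div hp]
    exact ENNReal.rpow_le_rpow le_self_add (by positivity)

end Mean

section StarComb

theorem starComb_mono {Z : Type*} {d : Z → Z → ℝ} {lam : ℝ} {A A' B B' : Set Z} (hA : A ⊆ A')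
    (hB : B ⊆ B') : starComb d lam A B ⊆ starComb d lam A' B' :=
  fun _ ⟨a, ha, b, hb, hz⟩ => ⟨a, hA ha, b, hB hb, hz⟩

variable {X : Type*} [PseudoMetricSpace X] {lam : ℝ} {A B : Set X}

theorem starComb_one_sub_comm (lam : ℝ) (A B : Set X) :
    starComb dist (1 - lam) B A = starComb dist lam A B := by
  ext z
  simp only [starComb, mem_ofPred_eq, sub_sub_cancel]
  constructor
  · rintro ⟨b, hb, a, ha, hzb, hza⟩
    exact ⟨a, ha, b, hb, dist_comm b a ▸ hza, dist_comm b a ▸ hzb⟩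
  · rintro ⟨a, ha, b, hb, hza, hzb⟩
    exact ⟨b, hb, a, ha, dist_comm a b ▸ hzb, dist_comm a b ▸ hza⟩

theorem starComb_closedBall_subset (hlam : lam ≤ 1) (x : X) (R r : ℝ) :
    starComb dist lam (closedBall x R) (closedBall x r) ⊆
      closedBall x ((1 - lam) * (R + r) + r) := by
  rintro z ⟨a, ha, b, hb, -, hzb⟩
  have hab : dist a b ≤ R + r :=
    (dist_triangle_right a b x).trans (add_le_add ha hb)
  calc dist z x ≤ dist z b + dist b x := dist_triangle z b x
    _ = (1 - lam) * dist a b + dist b x := by rw [hzb]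
    _ ≤ (1 - lam) * (R + r) + r := by
      have hlam' : 0 ≤ 1 - lam := sub_nonneg.2 hlam
      gcongr
      exact hb

theorem isBounded_starComb (hlam : lam ≤ 1) (hA : Bornology.IsBounded A)
    (hB : Bornology.IsBounded B) : Bornology.IsBounded (starComb dist lam A B) := by
  rcases B.eq_empty_or_nonempty with rfl | ⟨b, -⟩
  · simp [starComb]
  · obtain ⟨R, hR⟩ := hA.subset_closedBall b
    obtain ⟨r, hr⟩ := hB.subset_closedBall b
    exact isBounded_closedBall.subset
      ((starComb_mono hR hr).trans (starComb_closedBall_subset hlam b R r))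

theorem biInter_closure_starComb_closedBall_subset (lam : ℝ) (hA : IsCompact A) (b : X) :
    ⋂ r > 0, closure (starComb dist lam A (closedBall b r)) ⊆ starComb dist lam A {b} := by
  intro z hz
  obtain ⟨u, -, hu_pos, hu⟩ := exists_seq_strictAnti_tendsto (0 : ℝ)
  have happrox (n : ℕ) : ∃ w ∈ starComb dist lam A (closedBall b (u n)), dist z w < u n :=
    mem_closure_iff.1 (mem_iInter₂.1 hz (u n) (hu_pos n)) (u n) (hu_pos n)
  choose w hw hzw using happrox
  choose a ha c hc hwa hwc using hw
  obtain ⟨a₀, ha₀, φ, hφ, ha_lim⟩ := hA.tendsto_subseq ha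
  have hw_lim : Tendsto (w ∘ φ) atTop (𝓝 z) :=
    (tendsto_iff_dist_tendsto_zero.2 <| squeeze_zero (fun _ => dist_nonneg)
      (fun n => (dist_comm (w n) z).trans_le (hzw n).le) hu).comp hφ.tendsto_atTop
  have hc_lim : Tendsto (c ∘ φ) atTop (𝓝 b) :=
    (tendsto_iff_dist_tendsto_zero.2 <| squeeze_zero (fun _ => dist_nonneg) hc hu).comp
      hφ.tendsto_atTop
  have hac_lim := ha_lim.dist hc_lim
  exact ⟨a₀, ha₀, b, rfl,
    tendsto_nhds_unique (hw_lim.dist ha_lim)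
      ((hac_lim.const_mul lam).congr fun n => (hwa (φ n)).symm),
    tendsto_nhds_unique (hw_lim.dist hc_lim)
      ((hac_lim.const_mul (1 - lam)).congr fun n => (hwc (φ n)).symm)⟩

end StarComb

theorem isOpenPosMeasure_of_measure_ball_pos {X : Type*} [PseudoMetricSpace X]
    [MeasurableSpace X] {μ : Measure X} (hpos : ∀ (x : X) (r : ℝ), 0 < r → 0 < μ (ball x r)) :
    μ.IsOpenPosMeasure where
  open_pos U hU := by
    rintro ⟨x, hx⟩
    obtain ⟨r, hr, hrU⟩ := Metric.isOpen_iff.1 hU x hx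
    exact ((hpos x r hr).trans_le (measure_mono hrU)).ne'

namespace SatisfiesBM

section General

variable {X : Type*} [MeasurableSpace X] {d : X → X → ℝ} {μ : Measure X} {p lam : ℝ}
  {A B C : Set X}

theorem rpow_one_div_mul_measure_le (hBM : SatisfiesBM d μ p) (hp : 0 < p)
    (hlam : lam ∈ Ioo (0 : ℝ) 1) (hA : MeasurableSet A) (hB : MeasurableSet B)
    (hC : MeasurableSet C) (hB0 : μ B ≠ 0) (hABC : starComb d lam A B ⊆ C) :
    ENNReal.ofReal (1 - lam) ^ (1 / p) * μ A ≤ μ C := by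
  rcases eq_or_ne (μ A) 0 with hA0 | hA0
  · simp [hA0]
  · exact (rpow_one_div_mul_le_Mp hp lam (μ A) hB0).trans <|
      hBM lam hlam A B C (nonempty_of_measure_ne_zero hA0) (nonempty_of_measure_ne_zero hB0)
        hA hB hC hA0 hB0 hABC

end General

section Bounded

variable {X : Type*} [PseudoMetricSpace X] [MeasurableSpace X] [OpensMeasurableSpace X]
  {μ : Measure X} [IsLocallyFiniteMeasure μ] [μ.IsOpenPosMeasure] {p : ℝ}

theorem measure_closedBall_ne_top (hBM : SatisfiesBM dist μ p) (hp : 0 < p) (x : X) {R : ℝ}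
    (hR : 0 < R) : μ (closedBall x R) ≠ ∞ := by
  obtain ⟨ε, hε, hμε⟩ := (μ.finiteAt_nhds x).exists_mem_basis nhds_basis_closedBall
  set lam := R / (R + ε / 2) with hlam_def
  have hlam : lam ∈ Ioo (0 : ℝ) 1 :=
    ⟨by positivity, (div_lt_one (by positivity)).2 (by linarith)⟩
  have hradius : (1 - lam) * (R + ε / 2) + ε / 2 = ε := by
    rw [hlam_def]
    field_simp
    ring
  have hcontract : ENNReal.ofReal (1 - lam) ^ (1 / p) * μ (closedBall x R) ≤ μ (closedBall x ε) :=
    hBM.rpow_one_div_mul_measure_le hp hlam measurableSet_closedBall measurableSet_closedBall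
      measurableSet_closedBall (measure_closedBall_pos μ x (half_pos hε)).ne'
      ((starComb_closedBall_subset hlam.2.le x R (ε / 2)).trans_eq (congrArg _ hradius))
  have hcoeff : ENNReal.ofReal (1 - lam) ^ (1 / p) ≠ 0 :=
    (ENNReal.rpow_pos (ENNReal.ofReal_pos.2 (sub_pos.2 hlam.2)) ENNReal.ofReal_ne_top).ne'
  exact fun htop => (hcontract.trans_lt hμε).ne (by rw [htop, ENNReal.mul_top hcoeff])

theorem measure_ne_top_of_isBounded (hBM : SatisfiesBM dist μ p) (hp : 0 < p) {s : Set X}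
    (hs : Bornology.IsBounded s) : μ s ≠ ∞ := by
  rcases s.eq_empty_or_nonempty with rfl | ⟨x, -⟩
  · simp
  · obtain ⟨R, hR, hsR⟩ := hs.subset_closedBall_lt 0 x
    exact measure_ne_top_of_subset hsR (hBM.measure_closedBall_ne_top hp x hR)

end Bounded

section Radon

variable {X : Type*} [MetricSpace X] [MeasurableSpace X] [OpensMeasurableSpace X]
  {μ : Measure X} [IsLocallyFiniteMeasure μ] [μ.IsOpenPosMeasure] {p lam : ℝ} {A B : Set X}

theorem rpow_one_div_mul_measure_le_starComb_singleton (hBM : SatisfiesBM dist μ p) (hp : 0 < p)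
    (hlam : lam ∈ Ioo (0 : ℝ) 1) (hA : IsCompact A) (b : X) :
    ENNReal.ofReal (1 - lam) ^ (1 / p) * μ A ≤ μ (starComb dist lam A {b}) := by
  set S : ℝ → Set X := fun r => closure (starComb dist lam A (closedBall b r))
  have hS_meas (r : ℝ) : MeasurableSet (S r) := isClosed_closure.measurableSet
  have hS_mono : Monotone S := fun _ _ hrs =>
    closure_mono (starComb_mono subset_rfl (closedBall_subset_closedBall hrs))
  have hS_fin : μ (S 1) ≠ ∞ := hBM.measure_ne_top_of_isBounded hp
    (isBounded_starComb hlam.2.le hA.isBounded isBounded_closedBall).closure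
  have hS_lim : Tendsto (μ ∘ S) (𝓝[>] 0) (𝓝 (μ (⋂ r > 0, S r))) :=
    tendsto_measure_biInter_gt (fun r _ => (hS_meas r).nullMeasurableSet)
      (fun _ _ _ hrs => hS_mono hrs) ⟨1, one_pos, hS_fin⟩
  have hS_ge (r : ℝ) (hr : 0 < r) : ENNReal.ofReal (1 - lam) ^ (1 / p) * μ A ≤ μ (S r) :=
    hBM.rpow_one_div_mul_measure_le hp hlam hA.measurableSet measurableSet_closedBall (hS_meas r)
      (measure_closedBall_pos μ b hr).ne' subset_closure
  exact (ge_of_tendsto hS_lim (eventually_mem_nhdsWithin.mono hS_ge)).trans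
    (measure_mono (biInter_closure_starComb_closedBall_subset lam hA b))

theorem rpow_one_div_mul_measure_le_starComb [μ.InnerRegular] (hBM : SatisfiesBM dist μ p)
    (hp : 0 < p) (hlam : lam ∈ Ioo (0 : ℝ) 1) (hA : MeasurableSet A) (hB : B.Nonempty) :
    ENNReal.ofReal (1 - lam) ^ (1 / p) * μ A ≤ μ (starComb dist lam A B) := by
  obtain ⟨b, hb⟩ := hB
  simp only [hA.measure_eq_iSup_isCompact, ENNReal.mul_iSup, iSup_le_iff]
  intro K hKA hK
  exact (hBM.rpow_one_div_mul_measure_le_starComb_singleton hp hlam hK b).trans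
    (measure_mono (starComb_mono hKA (singleton_subset_iff.2 hb)))

end Radon

end SatisfiesBM

theorem statement6_general {X : Type*} [MetricSpace X] [MeasurableSpace X]
    [OpensMeasurableSpace X] (μ : Measure X) [IsLocallyFiniteMeasure μ] [μ.IsOpenPosMeasure]
    [μ.InnerRegular] {p : ℝ} (hp : 0 < p) (hBM : SatisfiesBM (dist : X → X → ℝ) μ p) :
    SatisfiesBMbarPos (dist : X → X → ℝ) μ p := by
  intro lam hlam A B C hA hB hA_meas hB_meas hC_meas hABC
  rcases eq_or_ne (μ A) 0 with hA0 | hA0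
  · have hlam' : 1 - lam ∈ Ioo (0 : ℝ) 1 := ⟨sub_pos.2 hlam.2, sub_lt_self 1 hlam.1⟩
    have hBC := hBM.rpow_one_div_mul_measure_le_starComb hp hlam' hB_meas hA
    rw [starComb_one_sub_comm, sub_sub_cancel] at hBC
    rw [hA0, ENNReal.zero_rpow_of_pos hp, mul_zero, zero_add, mul_rpow_rpow_one_div hp]
    exact hBC.trans (measure_mono hABC)
  rcases eq_or_ne (μ B) 0 with hB0 | hB0
  · rw [hB0, ENNReal.zero_rpow_of_pos hp, mul_zero, add_zero, mul_rpow_rpow_one_div hp]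
    exact (hBM.rpow_one_div_mul_measure_le_starComb hp hlam hA_meas hB).trans (measure_mono hABC)
  · rw [← Mp_coe_of_ne_zero hp.ne' lam hA0 hB0]
    exact hBM lam hlam A B C hA hB hA_meas hB_meas hC_meas hA0 hB0 hABC

/-- Proposition `p:BMzeromeas_sets`: on a locally compact metric measure
space with a strictly positive Radon measure, `BM(p)` for `p > 0` implies the general
inequality `B̄M(p)`. -/
theorem statement6 {X : Type*} [MetricSpace X] [LocallyCompactSpace X]
    [MeasurableSpace X] [OpensMeasurableSpace X]
    (μ : Measure X) [IsLocallyFiniteMeasure μ]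
    (hd : StrictlyIntrinsicDist (dist : X → X → ℝ))
    (hinner : μ.InnerRegular)
    (hpos : ∀ (x : X) (r : ℝ), 0 < r → 0 < μ (Metric.ball x r))
    (p : ℝ) (hp : 0 < p)
    (hBM : SatisfiesBM (dist : X → X → ℝ) μ (p : EReal)) :
    SatisfiesBMbarPos (dist : X → X → ℝ) μ p := by
  have : μ.IsOpenPosMeasure := isOpenPosMeasure_of_measure_ball_pos hpos
  exact statement6_general μ hp hBM

end
end

section
/- Let μ be the measure on ℝ given by dμ(x)=φ(x)dx, where φ:ℝ→[0,∞) is continuous. If μ((1−λ)A+λB) ≥ (1−λ)μ(A)+λμ(B) holds for every λ∈(0,1) and all measurable sets A,B⊆ℝ containing the origin such that (1−λ)A+λB is also measurable, then φ is positively decreasing. -/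
open MeasureTheory Set Metric Filter
open scoped ENNReal NNReal Topology Pointwise

noncomputable section

/-!
Tested on intervals with an endpoint at the origin, the linear Brunn–Minkowski inequality says that
the primitive `t ↦ ∫ x in 0..t, φ x` is concave on `[0, ∞)` and, because the integral changes sign
to the left of the origin, convex on `(-∞, 0]`. Its derivative is `φ`.
-/

section Density

variable {f : ℝ → ℝ} {a b : ℝ}

lemma withDensity_ofReal_Icc {ν : Measure ℝ} [NullSingletonClass ν] (hab : a ≤ b)
    (hf0 : ∀ x ∈ Icc a b, 0 ≤ f x) (hf : IntegrableOn f (Icc a b) ν) :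
    ν.withDensity (fun x ↦ ENNReal.ofReal (f x)) (Icc a b)
      = ENNReal.ofReal (∫ x in a..b, f x ∂ν) := by
  rw [withDensity_apply _ measurableSet_Icc, intervalIntegral.integral_of_le hab,
    ← integral_Icc_eq_integral_Ioc,
    ofReal_integral_eq_lintegral_ofReal hf (ae_restrict_of_forall_mem measurableSet_Icc hf0)]

variable {S : Set ℝ}

lemma antitoneOn_of_concaveOn_integral (hf : Continuous f)
    (hconc : ConcaveOn ℝ S fun t ↦ ∫ x in a..t, f x) : AntitoneOn f S :=
  (hconc.antitoneOn_deriv fun t _ ↦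
    (hf.integral_hasStrictDerivAt a t).hasDerivAt.differentiableAt).congr
      fun t _ ↦ hf.deriv_integral f a t

lemma monotoneOn_of_convexOn_integral (hf : Continuous f)
    (hconv : ConvexOn ℝ S fun t ↦ ∫ x in a..t, f x) : MonotoneOn f S :=
  (hconv.monotoneOn_deriv fun t _ ↦
    (hf.integral_hasStrictDerivAt a t).hasDerivAt.differentiableAt).congr
      fun t _ ↦ hf.deriv_integral f a t

end Density

lemma positivelyDecreasing_of_antitoneOn_of_monotoneOn {φ : ℝ → ℝ} (hanti : AntitoneOn φ (Ici 0))
    (hmono : MonotoneOn φ (Iic 0)) : PositivelyDecreasing φ :=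
  ⟨fun _ _ hs hst ↦ hanti hs (hs.trans hst) hst, fun _ _ hs hst ↦
    hmono (neg_nonpos.2 (hs.trans hst)) (neg_nonpos.2 hs) (neg_le_neg hst)⟩

/-- The linear Brunn–Minkowski inequality `μ((1-λ)A + λB) ≥ (1-λ)μ(A) + λμ(B)`, required only for
compact intervals `A = [a, b]` and `B = [c, d]` containing the origin. -/
def SatisfiesIntervalBM (μ : Measure ℝ) : Prop :=
  ∀ lam ∈ Ioo (0 : ℝ) 1, ∀ a b c d : ℝ, 0 ∈ Icc a b → 0 ∈ Icc c d →
    ENNReal.ofReal (1 - lam) * μ (Icc a b) + ENNReal.ofReal lam * μ (Icc c d)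
      ≤ μ ((1 - lam) • Icc a b + lam • Icc c d)

namespace SatisfiesIntervalBM

variable {φ : ℝ → ℝ}

lemma convexCombo_integral_le
    (hBM : SatisfiesIntervalBM (volume.withDensity fun x ↦ ENNReal.ofReal (φ x)))
    (hφ0 : ∀ x, 0 ≤ φ x) (hφc : Continuous φ) {lam a b c d : ℝ} (hlam : lam ∈ Ioo 0 1)
    (hab : 0 ∈ Icc a b) (hcd : 0 ∈ Icc c d) :
    (1 - lam) * (∫ x in a..b, φ x) + lam * (∫ x in c..d, φ x)
      ≤ ∫ x in ((1 - lam) * a + lam * c)..((1 - lam) * b + lam * d), φ x := by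
  have hlam0 : 0 < lam := hlam.1
  have hlam1 : 0 < 1 - lam := sub_pos.2 hlam.2
  have hab' : a ≤ b := hab.1.trans hab.2
  have hcd' : c ≤ d := hcd.1.trans hcd.2
  have left_le : (1 - lam) * a ≤ (1 - lam) * b := by gcongr
  have right_le : lam * c ≤ lam * d := by gcongr
  have combo_eq : (1 - lam) • Icc a b + lam • Icc c d
      = Icc ((1 - lam) * a + lam * c) ((1 - lam) * b + lam * d) := by
    rw [LinearOrderedField.smul_Icc hlam1, LinearOrderedField.smul_Icc hlam0,
      Icc_add_Icc left_le right_le]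
  have measure_Icc {p q : ℝ} (hpq : p ≤ q) :
      volume.withDensity (fun x ↦ ENNReal.ofReal (φ x)) (Icc p q)
        = ENNReal.ofReal (∫ x in p..q, φ x) :=
    withDensity_ofReal_Icc hpq (fun x _ ↦ hφ0 x) hφc.integrableOn_Icc
  have integral_nonneg {p q : ℝ} (hpq : p ≤ q) : 0 ≤ ∫ x in p..q, φ x :=
    intervalIntegral.integral_nonneg_of_forall hpq hφ0
  have hle := hBM lam hlam a b c d hab hcd
  rwa [combo_eq, measure_Icc hab', measure_Icc hcd', measure_Icc (add_le_add left_le right_le),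
    ← ENNReal.ofReal_mul hlam1.le, ← ENNReal.ofReal_mul hlam0.le,
    ← ENNReal.ofReal_add (mul_nonneg hlam1.le (integral_nonneg hab'))
      (mul_nonneg hlam0.le (integral_nonneg hcd')),
    ENNReal.ofReal_le_ofReal_iff (integral_nonneg (add_le_add left_le right_le))] at hle

lemma concaveOn_integral
    (hBM : SatisfiesIntervalBM (volume.withDensity fun x ↦ ENNReal.ofReal (φ x)))
    (hφ0 : ∀ x, 0 ≤ φ x) (hφc : Continuous φ) :
    ConcaveOn ℝ (Ici 0) fun t ↦ ∫ x in (0 : ℝ)..t, φ x := by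
  refine concaveOn_iff_forall_pos.2 ⟨convex_Ici 0, fun s hs t ht r lam hr hlam hsum ↦ ?_⟩
  obtain rfl : r = 1 - lam := eq_sub_of_add_eq hsum
  simpa using
    hBM.convexCombo_integral_le hφ0 hφc ⟨hlam, sub_pos.1 hr⟩
      (left_mem_Icc.2 hs) (left_mem_Icc.2 ht)

lemma convexOn_integral
    (hBM : SatisfiesIntervalBM (volume.withDensity fun x ↦ ENNReal.ofReal (φ x)))
    (hφ0 : ∀ x, 0 ≤ φ x) (hφc : Continuous φ) :
    ConvexOn ℝ (Iic 0) fun t ↦ ∫ x in (0 : ℝ)..t, φ x := by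
  refine convexOn_iff_forall_pos.2 ⟨convex_Iic 0, fun s hs t ht r lam hr hlam hsum ↦ ?_⟩
  obtain rfl : r = 1 - lam := eq_sub_of_add_eq hsum
  have hle :=
    hBM.convexCombo_integral_le hφ0 hφc ⟨hlam, sub_pos.1 hr⟩
      (right_mem_Icc.2 hs) (right_mem_Icc.2 ht)
  simp only [mul_zero, add_zero, intervalIntegral.integral_symm 0] at hle
  simp only [smul_eq_mul]
  linarith

end SatisfiesIntervalBM

theorem statement7_general {φ : ℝ → ℝ} (hφ0 : ∀ x, 0 ≤ φ x) (hφc : Continuous φ)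
    (hBM : SatisfiesIntervalBM (volume.withDensity fun x ↦ ENNReal.ofReal (φ x))) :
    PositivelyDecreasing φ :=
  positivelyDecreasing_of_antitoneOn_of_monotoneOn
    (antitoneOn_of_concaveOn_integral hφc (hBM.concaveOn_integral hφ0 hφc))
    (monotoneOn_of_convexOn_integral hφc (hBM.convexOn_integral hφ0 hφc))

/-- Proposition `p:linBMimplies_quasi`: if the linear Brunn–Minkowski
inequality holds for all measurable subsets of `ℝ` containing the origin, for the measure
with continuous density `φ`, then `φ` is positively decreasing. -/
theorem statement7 (φ : ℝ → ℝ) (hφ0 : ∀ x, 0 ≤ φ x) (hφc : Continuous φ)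
    (μ : Measure ℝ) (hμ : μ = (volume : Measure ℝ).withDensity fun x => ENNReal.ofReal (φ x))
    (H : ∀ lam : ℝ, lam ∈ Ioo (0:ℝ) 1 → ∀ A B : Set ℝ, (0:ℝ) ∈ A → (0:ℝ) ∈ B →
      MeasurableSet A → MeasurableSet B → MeasurableSet ((1 - lam) • A + lam • B) →
      ENNReal.ofReal (1 - lam) * μ A + ENNReal.ofReal lam * μ B
        ≤ μ ((1 - lam) • A + lam • B)) :
    PositivelyDecreasing φ := by
  subst hμ
  exact statement7_general hφ0 hφc fun lam hlam a b c d hab hcd ↦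
    H lam hlam _ _ hab hcd measurableSet_Icc measurableSet_Icc
      ((isCompact_Icc.smul _).add (isCompact_Icc.smul _)).measurableSet

end
end

section
/- Let m₁,m₂>0 and p ≥ −1/(m₁+m₂), and let (X,d_X,μ_X), (Y,d_Y,μ_Y) be metric measure spaces with σ-finite measures. If (Y,d_Y,μ_Y) satisfies BBL(p,m₂) and (X,d_X,μ_X) satisfies BBL(q,m₁) where q = p/(m₂p+1), then (X×Y,ρ,μ_{X×Y}) satisfies BBL(p,m₁+m₂). -/
open MeasureTheory Set Metric Filter
open scoped ENNReal NNReal Topology Pointwise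

noncomputable section

/-!
`BBL(p, m)` shifts `1/p` by `m`: its conclusion has exponent `q` with `1/q = 1/p + m`, so applying
`BBL(p, m₂)` and then `BBL(q, m₁)` shifts it by `m₁ + m₂`. A pair of `λ`-intermediate points of `X`
and `Y` is `λ`-intermediate for `ρ`, so `BBL(p, m₂)` on the fibres `{x} × Y` shows that the fibre
integrals of `f`, `g`, `h` satisfy the hypothesis of `BBL(q, m₁)` on `X`, whose conclusion is the
claim by Tonelli.
-/

theorem mem_starComb_singleton {Z : Type*} {d : Z → Z → ℝ} {lam : ℝ} {x y z : Z} :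
    z ∈ starComb d lam {x} {y} ↔ d z x = lam * d x y ∧ d z y = (1 - lam) * d x y := by
  simp only [starComb, mem_singleton_iff, exists_eq_left, mem_ofPred_eq]

section Rho

variable {X Y : Type*} [PseudoMetricSpace X] [PseudoMetricSpace Y]

theorem rho_eq_mul_rho {c : ℝ} (hc : 0 ≤ c) {u v x y : X × Y}
    (hfst : dist u.1 v.1 = c * dist x.1 y.1) (hsnd : dist u.2 v.2 = c * dist x.2 y.2) :
    rho u v = c * rho x y := by
  rw [rho, rho, hfst, hsnd, mul_pow, mul_pow, ← mul_add, Real.sqrt_mul (sq_nonneg c),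
    Real.sqrt_sq hc]

theorem starComb_prod_starComb_subset_starComb_rho {lam : ℝ} (hlam : lam ∈ Icc (0 : ℝ) 1)
    (A B : Set X) (A' B' : Set Y) :
    starComb dist lam A B ×ˢ starComb dist lam A' B' ⊆ starComb rho lam (A ×ˢ A') (B ×ˢ B') := by
  rintro z ⟨⟨a, ha, b, hb, hza, hzb⟩, ⟨a', ha', b', hb', hza', hzb'⟩⟩
  exact ⟨(a, a'), ⟨ha, ha'⟩, (b, b'), ⟨hb, hb'⟩, rho_eq_mul_rho hlam.1 hza hza',
    rho_eq_mul_rho (sub_nonneg.2 hlam.2) hzb hzb'⟩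

end Rho

open Classical in
/-- The exponent `p / (m p + 1)` of the mean of the integrals in the conclusion of `BBL(p, m)`. It
is read as `-∞` at the endpoint `p = -1/m`, where real division would return `0`. -/
def bblExponent (p m : ℝ) : EReal :=
  if m * p + 1 = 0 then ⊥ else ((p / (m * p + 1) : ℝ) : EReal)

theorem bblExponent_of_ne {p m : ℝ} (h : m * p + 1 ≠ 0) :
    bblExponent p m = ((p / (m * p + 1) : ℝ) : EReal) :=
  if_neg h

theorem bblExponent_div_mul_add_one {p m₁ m₂ : ℝ} (h : m₂ * p + 1 ≠ 0) :
    bblExponent (p / (m₂ * p + 1)) m₁ = bblExponent p (m₁ + m₂) := by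
  have denominator_eq :
      m₁ * (p / (m₂ * p + 1)) + 1 = ((m₁ + m₂) * p + 1) / (m₂ * p + 1) := by
    rw [mul_div_assoc', div_add_one h]
    ring
  simp only [bblExponent, denominator_eq, div_eq_zero_iff, h, or_false,
    div_div_div_cancel_right₀ h]

theorem mul_add_one_pos_of_neg_one_div_add_le {m₁ m₂ p : ℝ} (hm₁ : 0 < m₁) (hm₂ : 0 < m₂)
    (hp : -1 / (m₁ + m₂) ≤ p) : 0 < m₂ * p + 1 := by
  have hm : 0 < m₁ + m₂ := add_pos hm₁ hm₂
  calc
    0 < m₁ / (m₁ + m₂) := div_pos hm₁ hm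
    _ = m₂ * (-1 / (m₁ + m₂)) + 1 := by
      field_simp
      ring
    _ ≤ m₂ * p + 1 := by gcongr

section Product

variable {X Y : Type*} [MeasurableSpace X] [MeasurableSpace Y]
  {dX : X → X → ℝ} {dY : Y → Y → ℝ} {d : X × Y → X × Y → ℝ} {μY : Measure Y} {m₁ m₂ p : ℝ}

theorem SatisfiesBBL.lintegral_fiber_le (hY : SatisfiesBBL dY μY p m₂)
    {lam : ℝ} (hlam : lam ∈ Ioo (0 : ℝ) 1)
    (hd : ∀ (x y : X) (x' y' : Y),
      starComb dX lam {x} {y} ×ˢ starComb dY lam {x'} {y'} ⊆ starComb d lam {(x, x')} {(y, y')})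
    {f g h : X × Y → ℝ≥0∞} (hf : Measurable f) (hg : Measurable g) (hh : Measurable h)
    (hfgh : ∀ u v w, d w u = lam * d u v → d w v = (1 - lam) * d u v →
      Mp p lam (f u) (g v) ≤ h w)
    {x y z : X} (hz : z ∈ starComb dX lam {x} {y}) :
    Mp (bblExponent p m₂) lam (∫⁻ t, f (x, t) ∂μY) (∫⁻ t, g (y, t) ∂μY) ≤
      ∫⁻ t, h (z, t) ∂μY := by
  refine hY lam hlam _ _ _ (hf.comp measurable_prodMk_left) (hg.comp measurable_prodMk_left)
    (hh.comp measurable_prodMk_left) fun x' y' z' hzx hzy ↦ ?_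
  have hzz' : (z, z') ∈ starComb d lam {(x, x')} {(y, y')} :=
    hd x y x' y' (mk_mem_prod hz (mem_starComb_singleton.2 ⟨hzx, hzy⟩))
  obtain ⟨hleft, hright⟩ := mem_starComb_singleton.1 hzz'
  exact hfgh _ _ _ hleft hright

theorem statement9_general {μX : Measure X} [SFinite μY]
    (hd : ∀ lam ∈ Ioo (0 : ℝ) 1, ∀ (x y : X) (x' y' : Y),
      starComb dX lam {x} {y} ×ˢ starComb dY lam {x'} {y'} ⊆ starComb d lam {(x, x')} {(y, y')})
    (hp : m₂ * p + 1 ≠ 0) (hY : SatisfiesBBL dY μY p m₂)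
    (hX : SatisfiesBBL dX μX (p / (m₂ * p + 1)) m₁) :
    SatisfiesBBL d (μX.prod μY) p (m₁ + m₂) := by
  intro lam hlam f g h hf hg hh hfgh
  have fiber_le (x y z : X) (hz : z ∈ starComb dX lam {x} {y}) :
      Mp ((p / (m₂ * p + 1) : ℝ) : EReal) lam (∫⁻ t, f (x, t) ∂μY) (∫⁻ t, g (y, t) ∂μY) ≤
        ∫⁻ t, h (z, t) ∂μY :=
    bblExponent_of_ne hp ▸ hY.lintegral_fiber_le hlam (hd lam hlam) hf hg hh hfgh hz
  have iterated_le :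
      Mp (bblExponent (p / (m₂ * p + 1)) m₁) lam (∫⁻ x, ∫⁻ t, f (x, t) ∂μY ∂μX)
        (∫⁻ x, ∫⁻ t, g (x, t) ∂μY ∂μX) ≤ ∫⁻ x, ∫⁻ t, h (x, t) ∂μY ∂μX :=
    hX lam hlam _ _ _ hf.lintegral_prod_right' hg.lintegral_prod_right'
      hh.lintegral_prod_right' fun x y z hzx hzy ↦
        fiber_le x y z (mem_starComb_singleton.2 ⟨hzx, hzy⟩)
  rwa [bblExponent_div_mul_add_one hp, ← lintegral_prod f hf.aemeasurable,
    ← lintegral_prod g hg.aemeasurable, ← lintegral_prod h hh.aemeasurable] at iterated_le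

end Product

/-- if `Y` satisfies `BBL(p,m₂)` and `X` satisfies `BBL(q,m₁)` with
`q = p/(m₂p+1)`, then `X × Y` satisfies `BBL(p, m₁+m₂)`. -/
theorem statement9 {X Y : Type*} [MetricSpace X] [MetricSpace Y]
    [MeasurableSpace X] [OpensMeasurableSpace X] [MeasurableSpace Y] [OpensMeasurableSpace Y]
    (μX : Measure X) (μY : Measure Y) [SigmaFinite μX] [SigmaFinite μY]
    (hdX : StrictlyIntrinsicDist (dist : X → X → ℝ))
    (hdY : StrictlyIntrinsicDist (dist : Y → Y → ℝ))
    (m₁ m₂ p : ℝ) (hm₁ : 0 < m₁) (hm₂ : 0 < m₂) (hp : -1/(m₁ + m₂) ≤ p)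
    (hY : SatisfiesBBL (dist : Y → Y → ℝ) μY p m₂)
    (hX : SatisfiesBBL (dist : X → X → ℝ) μX (p / (m₂ * p + 1)) m₁) :
    SatisfiesBBL (rho : X × Y → X × Y → ℝ) (μX.prod μY) p (m₁ + m₂) := by
  refine statement9_general (fun lam hlam x y x' y' ↦ ?_)
    (mul_add_one_pos_of_neg_one_div_add_le hm₁ hm₂ hp).ne' hY hX
  simpa only [singleton_prod_singleton] using
    starComb_prod_starComb_subset_starComb_rho (Ioo_subset_Icc_self hlam) {x} {y} {x'} {y'}

end
end

section
/- Let μ = μ₁×⋯×μₙ be a product measure on ℝⁿ where each μᵢ is given by dμᵢ(x) = φᵢ(x)dx with φᵢ:ℝ→[0,∞) positively decreasing. Let A,B⊆ℝⁿ be non-empty weakly unconditional convex sets. Then the functions t ↦ μ(A+tB)^{1/n} and t ↦ μ(tA)^{1/n} are concave on [0,∞). -/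
open MeasureTheory Set Metric Filter
open scoped ENNReal NNReal Topology Pointwise

noncomputable section

/-! A measure on `ℝ` whose density is nonincreasing on both half-lines satisfies the linear
Brunn–Minkowski inequality `ν ((1-λ)I + λJ) ≥ (1-λ) ν I + λ ν J` for intervals `I`, `J` containing
`0`: for Lebesgue measure this is additivity of lengths, and the superlevel sets of the density all
contain `0`, so the layer-cake formula transfers it. Layer cake once more, followed by the weighted
AM–GM inequality, turns it into a Prékopa–Leindler inequality whose geometric means carry a weight
`θ` that is free to differ from `λ`, at the price of a constant. By Fubini this inequality
tensorizes to `ℝⁿ`, and for indicator functions it gives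
`Kⁿ μ(A)^(1-θ) μ(B)^θ ≤ μ((1-λ)A + λB)`. Choosing `θ` so that AM–GM is an equality at
`(μ(A)^(1/n), μ(B)^(1/n))` yields the Brunn–Minkowski inequality with exponent `1/n`. The set
`A + ((1-λ)t + λs)B` is the combination of `A + tB` and `A + sB`, which gives the concavity. -/

/-- Monotonicity under the contractions `x ↦ ε * x`, `0 ≤ ε ≤ 1`, of an ordered ring. Over `ℝ` this
says that `f` is nonincreasing on both half-lines; over the ring `ι → ℝ` with pointwise operations
it says so in each coordinate. The analogous notion for a set `A` is `StarConvex R 0 A`. -/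
def StarDecreasing {R β : Type*} [MulZeroOneClass R] [Preorder R] [LE β] (f : R → β) : Prop :=
  ∀ x, ∀ ε ∈ Icc (0 : R) 1, f x ≤ f (ε * x)

lemma convex_of_starConvex_zero {I : Set ℝ} (hI : StarConvex ℝ 0 I) : Convex ℝ I := by
  rcases I.eq_empty_or_nonempty with rfl | hne
  · exact convex_empty
  · exact ((starConvex_iff_ordConnected (hI.mem hne)).1 hI).convex

namespace StarDecreasing

lemma apply_le_apply_zero {R β : Type*} [MulZeroOneClass R] [Preorder R] [ZeroLEOneClass R] [LE β]
    {f : R → β} (hf : StarDecreasing f) (x : R) : f x ≤ f 0 := by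
  simpa using hf x 0 ⟨le_rfl, zero_le_one⟩

lemma min_const {R β : Type*} [MulZeroOneClass R] [Preorder R] [LinearOrder β] {f : R → β}
    (hf : StarDecreasing f) (c : β) : StarDecreasing fun x => min (f x) c :=
  fun x ε hε => min_le_min_right c (hf x ε hε)

lemma const_mul {R : Type*} [MulZeroOneClass R] [Preorder R] {f : R → ℝ≥0∞}
    (hf : StarDecreasing f) (c : ℝ≥0∞) : StarDecreasing fun x => c * f x :=
  fun x ε hε => mul_le_mul_right (hf x ε hε) c

lemma indicator {R : Type*} [Ring R] [PartialOrder R] [IsOrderedRing R] {f : R → ℝ≥0∞} {A : Set R}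
    (hf : StarDecreasing f) (hA : StarConvex R 0 A) : StarDecreasing (A.indicator f) := by
  intro x ε hε
  by_cases hx : x ∈ A
  · have hεx : ε * x ∈ A := hA.smul_mem hx hε.1 hε.2
    simpa only [indicator_of_mem, hx, hεx] using hf x ε hε
  · simp only [indicator_of_notMem hx, zero_le]

lemma starConvex_setOf_lt {R β : Type*} [Ring R] [PartialOrder R] [IsOrderedRing R] [Preorder β]
    {f : R → β} (hf : StarDecreasing f) (c : β) : StarConvex R 0 {x | c < f x} :=
  starConvex_zero_iff.2 fun x hx ε hε₀ hε₁ => hx.trans_le (hf x ε ⟨hε₀, hε₁⟩)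

lemma quasiconcaveOn {β : Type*} [Preorder β] {f : ℝ → β} (hf : StarDecreasing f) :
    QuasiconcaveOn ℝ univ f := fun _ =>
  convex_of_starConvex_zero <| starConvex_zero_iff.2 fun x hx ε hε₀ hε₁ =>
    ⟨trivial, hx.2.trans (hf x ε ⟨hε₀, hε₁⟩)⟩

lemma measurable {f : ℝ → ℝ≥0∞} (hf : StarDecreasing f) : Measurable f :=
  measurable_of_Ici fun c => by
    have hset := (hf.quasiconcaveOn c).ordConnected.measurableSet
    simp only [mem_univ, true_and] at hset
    exact hset

end StarDecreasing

lemma volume_eq_ediam_of_ordConnected {s : Set ℝ} (hs : s.OrdConnected) :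
    volume s = ediam s := by
  refine (Real.volume_le_diam s).antisymm (ediam_le fun x hx y hy => ?_)
  calc edist x y = volume (uIcc x y) := by
        rw [Real.volume_interval, edist_dist, dist_comm, Real.dist_eq]
    _ ≤ volume s := measure_mono (hs.uIcc_subset hx hy)

lemma ediam_add_ediam_le {s t : Set ℝ} (hs : s.Nonempty) (ht : t.Nonempty) :
    ediam s + ediam t ≤ ediam (s + t) := by
  have edist_add_edist_le : ∀ p ∈ s ×ˢ s, ∀ q ∈ t ×ˢ t,
      edist p.1 p.2 + edist q.1 q.2 ≤ ediam (s + t) := by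
    rintro ⟨x, x'⟩ ⟨hx, hx'⟩ ⟨y, y'⟩ ⟨hy, hy'⟩
    wlog hxx : x ≤ x' generalizing x x'
    · simpa only [edist_comm] using this x' x hx' hx (le_of_not_ge hxx)
    wlog hyy : y ≤ y' generalizing y y'
    · simpa only [edist_comm] using this y' y hy' hy (le_of_not_ge hyy)
    calc edist x x' + edist y y' = edist (x + y) (x' + y') := by
          simp only [edist_dist, Real.dist_eq]
          rw [← ENNReal.ofReal_add (abs_nonneg _) (abs_nonneg _),
            abs_of_nonpos (by linarith), abs_of_nonpos (by linarith), abs_of_nonpos (by linarith)]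
          ring_nf
      _ ≤ ediam (s + t) := edist_le_ediam_of_mem (add_mem_add hx hy) (add_mem_add hx' hy')
  have h := ENNReal.biSup_add_biSup_le (hs.prod hs) (ht.prod ht) edist_add_edist_le
  rwa [biSup_prod, biSup_prod] at h

lemma volume_add_volume_le {s t : Set ℝ} (hs : Convex ℝ s) (ht : Convex ℝ t)
    (hs₀ : s.Nonempty) (ht₀ : t.Nonempty) : volume s + volume t ≤ volume (s + t) := by
  simpa only [volume_eq_ediam_of_ordConnected, hs.ordConnected, ht.ordConnected,
    (hs.add ht).ordConnected] using ediam_add_ediam_le hs₀ ht₀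

/-- The Brunn–Minkowski inequality with exponent `1` for intervals of `ℝ` that contain `0`, encoded
as nonempty sets star-convex at `0`. -/
def StarLinearBM (ν : Measure ℝ) (lam : ℝ) : Prop :=
  ∀ I J : Set ℝ, StarConvex ℝ 0 I → StarConvex ℝ 0 J → I.Nonempty → J.Nonempty →
    ENNReal.ofReal (1 - lam) * ν I + ENNReal.ofReal lam * ν J ≤ ν ((1 - lam) • I + lam • J)

lemma starLinearBM_volume {lam : ℝ} (hlam : lam ∈ Icc (0 : ℝ) 1) : StarLinearBM volume lam := by
  intro I J hI hJ hI₀ hJ₀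
  have volume_smul : ∀ c : ℝ, 0 ≤ c → ∀ s : Set ℝ, ENNReal.ofReal c * volume s = volume (c • s) :=
    fun c hc s => by simp [Measure.addHaar_smul_of_nonneg volume hc]
  rw [volume_smul _ (sub_nonneg.2 hlam.2), volume_smul _ hlam.1]
  exact volume_add_volume_le ((convex_of_starConvex_zero hI).smul _)
    ((convex_of_starConvex_zero hJ).smul _) hI₀.smul_set hJ₀.smul_set

lemma lintegral_eq_lintegral_measure_ofReal_lt {α : Type*} [MeasurableSpace α] (μ : Measure α)
    {f : α → ℝ≥0∞} (hf : AEMeasurable f μ) :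
    ∫⁻ x, f x ∂μ = ∫⁻ t in Ioi (0 : ℝ), μ {x | ENNReal.ofReal t < f x} := by
  by_cases htop : ∀ᵐ x ∂μ, f x ≠ ∞
  · have hlayer := lintegral_eq_lintegral_meas_lt μ
      (Eventually.of_forall fun x => ENNReal.toReal_nonneg (a := f x)) hf.ennreal_toReal
    have hf_real : ∫⁻ x, f x ∂μ = ∫⁻ x, ENNReal.ofReal (f x).toReal ∂μ :=
      lintegral_congr_ae (htop.mono fun x hx => (ENNReal.ofReal_toReal hx).symm)
    rw [hf_real, hlayer]
    refine setLIntegral_congr_fun measurableSet_Ioi fun t ht => measure_congr ?_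
    filter_upwards [htop] with x hx
    exact propext (ENNReal.ofReal_lt_iff_lt_toReal (le_of_lt ht) hx).symm
  · have hpos : μ {x | f x = ∞} ≠ 0 := by simpa only [ae_iff, not_not] using htop
    have hle : ∫⁻ _ in Ioi (0 : ℝ), μ {x | f x = ∞} ≤
        ∫⁻ t in Ioi (0 : ℝ), μ {x | ENNReal.ofReal t < f x} :=
      lintegral_mono fun t => measure_mono fun x hx =>
        ENNReal.ofReal_lt_top.trans_eq (Eq.symm hx)
    rw [lintegral_eq_top_of_measure_eq_top_ne_zero hf hpos]
    rw [setLIntegral_const, Real.volume_Ioi, ENNReal.mul_top hpos] at hle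
    exact (top_le_iff.1 hle).symm

/-- The common value at `0` makes the superlevel sets of `F` and `G` empty at the same heights. -/
lemma StarLinearBM.lintegral_le {ν : Measure ℝ} {lam : ℝ} (hν : StarLinearBM ν lam)
    {F G H : ℝ → ℝ≥0∞} (hF : StarDecreasing F) (hG : StarDecreasing G) (hH : Measurable H)
    (hFG : F 0 = G 0) (hmin : ∀ x y, min (F x) (G y) ≤ H ((1 - lam) * x + lam * y)) :
    ENNReal.ofReal (1 - lam) * ∫⁻ x, F x ∂ν + ENNReal.ofReal lam * ∫⁻ x, G x ∂ν
      ≤ ∫⁻ x, H x ∂ν := by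
  have measurable_superlevel : Measurable fun t : ℝ => ν {x | ENNReal.ofReal t < F x} :=
    Antitone.measurable fun s t hst => measure_mono fun x hx =>
      (ENNReal.ofReal_le_ofReal hst).trans_lt hx
  simp only [lintegral_eq_lintegral_measure_ofReal_lt ν hF.measurable.aemeasurable,
    lintegral_eq_lintegral_measure_ofReal_lt ν hG.measurable.aemeasurable,
    lintegral_eq_lintegral_measure_ofReal_lt ν hH.aemeasurable]
  rw [← lintegral_const_mul' _ _ ENNReal.ofReal_ne_top,
    ← lintegral_const_mul' _ _ ENNReal.ofReal_ne_top,
    ← lintegral_add_left (measurable_superlevel.const_mul _)]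
  refine lintegral_mono fun t => ?_
  by_cases ht : ENNReal.ofReal t < F 0
  · refine (hν _ _ (hF.starConvex_setOf_lt _) (hG.starConvex_setOf_lt _) ⟨0, ht⟩
      ⟨0, ht.trans_eq hFG⟩).trans (measure_mono ?_)
    rintro _ ⟨_, ⟨x, hx, rfl⟩, _, ⟨y, hy, rfl⟩, rfl⟩
    exact (lt_min hx hy).trans_le (hmin x y)
  · have hF_empty : {x | ENNReal.ofReal t < F x} = ∅ :=
      eq_empty_of_forall_notMem fun x hx => ht (hx.trans_le (hF.apply_le_apply_zero x))
    have hG_empty : {x | ENNReal.ofReal t < G x} = ∅ :=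
      eq_empty_of_forall_notMem fun x hx => ht (hFG ▸ hx.trans_le (hG.apply_le_apply_zero x))
    simp [hF_empty, hG_empty]

lemma starLinearBM_withDensity {lam : ℝ} (hlam : lam ∈ Icc (0 : ℝ) 1) {ψ : ℝ → ℝ≥0∞}
    (hψ : StarDecreasing ψ) : StarLinearBM (volume.withDensity ψ) lam := by
  intro I J hI hJ hI₀ hJ₀
  have cI := convex_of_starConvex_zero hI
  have cJ := convex_of_starConvex_zero hJ
  set C := (1 - lam) • I + lam • J
  have mC : MeasurableSet C := ((cI.smul _).add (cJ.smul _)).ordConnected.measurableSet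
  rw [withDensity_apply' _ I, withDensity_apply' _ J, withDensity_apply' _ C,
    ← lintegral_indicator cI.ordConnected.measurableSet,
    ← lintegral_indicator cJ.ordConnected.measurableSet, ← lintegral_indicator mC]
  refine (starLinearBM_volume hlam).lintegral_le (hψ.indicator hI) (hψ.indicator hJ)
    (hψ.measurable.indicator mC) ?_ fun x y => ?_
  · rw [indicator_of_mem (hI.mem hI₀), indicator_of_mem (hJ.mem hJ₀)]
  · by_cases hx : x ∈ I
    · by_cases hy : y ∈ J
      · have hxy : (1 - lam) * x + lam * y ∈ C :=
          add_mem_add (smul_mem_smul_set hx) (smul_mem_smul_set hy)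
        rw [indicator_of_mem hx, indicator_of_mem hy, indicator_of_mem hxy]
        exact (quasiconcaveOn_iff_min_le.1 hψ.quasiconcaveOn).2 trivial trivial
          (sub_nonneg.2 hlam.2) hlam.1 (sub_add_cancel 1 lam)
      · simp [indicator_of_notMem hy]
    · simp [indicator_of_notMem hx]

lemma min_le_rpow_mul_rpow {θ : ℝ} (hθ : θ ∈ Icc (0 : ℝ) 1) (u v : ℝ≥0∞) :
    min u v ≤ u ^ (1 - θ) * v ^ θ := by
  have hθ' : 0 ≤ 1 - θ := sub_nonneg.2 hθ.2
  calc min u v = min u v ^ (1 - θ) * min u v ^ θ := by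
        rw [← ENNReal.rpow_add_of_nonneg _ _ hθ' hθ.1, sub_add_cancel, ENNReal.rpow_one]
    _ ≤ u ^ (1 - θ) * v ^ θ := mul_le_mul' (ENNReal.rpow_le_rpow (min_le_left u v) hθ')
        (ENNReal.rpow_le_rpow (min_le_right u v) hθ.1)

lemma iSup_rpow {ι : Type*} (a : ι → ℝ≥0∞) {p : ℝ} (hp : 0 < p) : (⨆ i, a i) ^ p = ⨆ i, a i ^ p :=
  (ENNReal.orderIsoRpow p hp).map_iSup a

lemma lintegral_eq_iSup_lintegral_min_natCast {α : Type*} [MeasurableSpace α] (μ : Measure α)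
    {f : α → ℝ≥0∞} (hf : Measurable f) : ∫⁻ x, f x ∂μ = ⨆ n : ℕ, ∫⁻ x, min (f x) n ∂μ := by
  rw [← lintegral_iSup (fun n => hf.min measurable_const)
    fun m n hmn x => min_le_min_left _ (Nat.cast_le.2 hmn)]
  refine lintegral_congr fun x => ?_
  rw [← inf_iSup_eq, ENNReal.iSup_natCast, inf_top_eq]

/-- The Prékopa–Leindler inequality with constant `K` for star-decreasing functions, where the
weights `1 - θ`, `θ` of the geometric means may differ from the weights `1 - lam`, `lam` of the
convex combination of points. -/
def StarPrekopaLeindler {R : Type*} [Ring R] [Preorder R] [Module ℝ R] [MeasurableSpace R]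
    (μ : Measure R) (lam θ : ℝ) (K : ℝ≥0∞) : Prop :=
  ∀ f g h : R → ℝ≥0∞, Measurable f → Measurable g → Measurable h →
    StarDecreasing f → StarDecreasing g →
    (∀ x y, f x ^ (1 - θ) * g y ^ θ ≤ h ((1 - lam) • x + lam • y)) →
    K * ((∫⁻ x, f x ∂μ) ^ (1 - θ) * (∫⁻ x, g x ∂μ) ^ θ) ≤ ∫⁻ x, h x ∂μ

namespace StarLinearBM

variable {ν : Measure ℝ} {lam θ : ℝ} {K : ℝ≥0∞} {f g h : ℝ → ℝ≥0∞}

lemma geom_mean_lintegral_le_of_apply_zero_eq (hν : StarLinearBM ν lam) (hθ : θ ∈ Icc (0 : ℝ) 1)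
    (hK : ∀ X Y : ℝ≥0∞,
      K * (X ^ (1 - θ) * Y ^ θ) ≤ ENNReal.ofReal (1 - lam) * X + ENNReal.ofReal lam * Y)
    (hf : StarDecreasing f) (hg : StarDecreasing g) (hh : Measurable h) (hfg : f 0 = g 0)
    (hfgh : ∀ x y, f x ^ (1 - θ) * g y ^ θ ≤ h ((1 - lam) * x + lam * y)) :
    K * ((∫⁻ x, f x ∂ν) ^ (1 - θ) * (∫⁻ x, g x ∂ν) ^ θ) ≤ ∫⁻ x, h x ∂ν :=
  (hK _ _).trans <| hν.lintegral_le hf hg hh hfg fun x y =>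
    (min_le_rpow_mul_rpow hθ _ _).trans (hfgh x y)

lemma geom_mean_lintegral_le_of_apply_zero_ne_top (hν : StarLinearBM ν lam)
    (hθ : θ ∈ Ioo (0 : ℝ) 1)
    (hK : ∀ X Y : ℝ≥0∞,
      K * (X ^ (1 - θ) * Y ^ θ) ≤ ENNReal.ofReal (1 - lam) * X + ENNReal.ofReal lam * Y)
    (hf : StarDecreasing f) (hg : StarDecreasing g) (hh : Measurable h)
    (hf_top : f 0 ≠ ∞) (hg_top : g 0 ≠ ∞)
    (hfgh : ∀ x y, f x ^ (1 - θ) * g y ^ θ ≤ h ((1 - lam) * x + lam * y)) :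
    K * ((∫⁻ x, f x ∂ν) ^ (1 - θ) * (∫⁻ x, g x ∂ν) ^ θ) ≤ ∫⁻ x, h x ∂ν := by
  have eq_zero : ∀ {u : ℝ → ℝ≥0∞}, StarDecreasing u → u 0 = 0 → ∀ x, u x = 0 :=
    fun hu hu₀ x => le_zero_iff.1 ((hu.apply_le_apply_zero x).trans_eq hu₀)
  by_cases hf₀ : f 0 = 0
  · simp [eq_zero hf hf₀, ENNReal.zero_rpow_of_pos (sub_pos.2 hθ.2)]
  by_cases hg₀ : g 0 = 0
  · simp [eq_zero hg hg₀, ENNReal.zero_rpow_of_pos hθ.1]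
  -- Rescaling `g` makes the values at `0` agree, and multiplies both sides by `(f 0 / g 0) ^ θ`.
  set a := f 0 / g 0
  have ha₀ : a ^ θ ≠ 0 := (ENNReal.rpow_pos (ENNReal.div_pos hf₀ hg_top)
    (ENNReal.div_ne_top hf_top hg₀)).ne'
  have ha_top : a ^ θ ≠ ∞ := ENNReal.rpow_ne_top_of_nonneg hθ.1.le (ENNReal.div_ne_top hf_top hg₀)
  have hscaled := hν.geom_mean_lintegral_le_of_apply_zero_eq (Ioo_subset_Icc_self hθ) hK hf
    (hg.const_mul a) (hh.const_mul (a ^ θ)) (ENNReal.div_mul_cancel hg₀ hg_top).symm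
    fun x y => by
      rw [ENNReal.mul_rpow_of_nonneg _ _ hθ.1.le, mul_left_comm]
      exact mul_le_mul_right (hfgh x y) _
  rw [lintegral_const_mul _ hg.measurable, lintegral_const_mul _ hh,
    ENNReal.mul_rpow_of_nonneg _ _ hθ.1.le, mul_left_comm _ (a ^ θ), mul_left_comm K] at hscaled
  exact (ENNReal.mul_le_mul_iff_right ha₀ ha_top).1 hscaled

lemma starPrekopaLeindler (hν : StarLinearBM ν lam) (hθ : θ ∈ Ioo (0 : ℝ) 1)
    (hK : ∀ X Y : ℝ≥0∞,
      K * (X ^ (1 - θ) * Y ^ θ) ≤ ENNReal.ofReal (1 - lam) * X + ENNReal.ofReal lam * Y) :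
    StarPrekopaLeindler ν lam θ K := by
  intro f g h mf mg mh hf hg hfgh
  rw [lintegral_eq_iSup_lintegral_min_natCast ν mf, lintegral_eq_iSup_lintegral_min_natCast ν mg,
    iSup_rpow _ (sub_pos.2 hθ.2), iSup_rpow _ hθ.1]
  simp only [ENNReal.iSup_mul, ENNReal.mul_iSup]
  refine iSup_le fun k => iSup_le fun m => ?_
  refine hν.geom_mean_lintegral_le_of_apply_zero_ne_top hθ hK (hf.min_const m) (hg.min_const k) mh
    (by simp) (by simp) fun x y => le_trans ?_ (hfgh x y)
  exact mul_le_mul' (ENNReal.rpow_le_rpow (min_le_left _ _) (sub_nonneg.2 hθ.2.le))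
    (ENNReal.rpow_le_rpow (min_le_left _ _) hθ.1.le)

end StarLinearBM

namespace StarDecreasing

variable {R S : Type*} [Ring R] [PartialOrder R] [Ring S] [PartialOrder S] {f : R × S → ℝ≥0∞}

lemma comp_prodMk [IsOrderedRing R] (hf : StarDecreasing f) (x : R) :
    StarDecreasing fun y => f (x, y) := fun y ε hε => by
  simpa using hf (x, y) (1, ε) ⟨Prod.mk_le_mk.2 ⟨zero_le_one, hε.1⟩, Prod.mk_le_mk.2 ⟨le_rfl, hε.2⟩⟩

lemma lintegral_prodMk [IsOrderedRing S] [MeasurableSpace S] (hf : StarDecreasing f)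
    (ν : Measure S) : StarDecreasing fun x => ∫⁻ y, f (x, y) ∂ν :=
  fun x ε hε => lintegral_mono fun y => by
    simpa using
      hf (x, y) (ε, 1) ⟨Prod.mk_le_mk.2 ⟨hε.1, zero_le_one⟩, Prod.mk_le_mk.2 ⟨hε.2, le_rfl⟩⟩

lemma comp_fin_cons {n : ℕ} {f : (Fin (n + 1) → R) → ℝ≥0∞} (hf : StarDecreasing f) :
    StarDecreasing fun p : R × (Fin n → R) => f (Fin.cons p.1 p.2) := fun p ε hε => by
  have hmul : (Fin.cons (ε * p).1 (ε * p).2 : Fin (n + 1) → R) =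
      Fin.cons ε.1 ε.2 * Fin.cons p.1 p.2 := by
    ext i; refine Fin.cases ?_ (fun j => ?_) i <;> simp
  have hle := hf (Fin.cons p.1 p.2) (Fin.cons ε.1 ε.2)
    ⟨Fin.le_cons.2 ⟨hε.1.1, hε.1.2⟩, Fin.cons_le.2 ⟨hε.2.1, hε.2.2⟩⟩
  rwa [← hmul] at hle

end StarDecreasing

namespace StarPrekopaLeindler

variable {R : Type*} [Ring R] [PartialOrder R] [Module ℝ R] [MeasurableSpace R]
  {μ : Measure R} {lam θ : ℝ} {K L : ℝ≥0∞}

lemma const_mul_le (hμ : StarPrekopaLeindler μ lam θ K) {c : ℝ≥0∞} (hc : c ≠ ∞)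
    {f g h : R → ℝ≥0∞} (mf : Measurable f) (mg : Measurable g) (mh : Measurable h)
    (hf : StarDecreasing f) (hg : StarDecreasing g)
    (hfgh : ∀ x y, c * (f x ^ (1 - θ) * g y ^ θ) ≤ h ((1 - lam) • x + lam • y)) :
    c * K * ((∫⁻ x, f x ∂μ) ^ (1 - θ) * (∫⁻ x, g x ∂μ) ^ θ) ≤ ∫⁻ x, h x ∂μ := by
  rcases eq_or_ne c 0 with rfl | hc₀
  · simp
  rw [mul_assoc, ENNReal.mul_le_iff_le_inv hc₀ hc, ← lintegral_const_mul _ mh]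
  exact hμ f g _ mf mg (mh.const_mul _) hf hg fun x y =>
    (ENNReal.mul_le_iff_le_inv hc₀ hc).1 (hfgh x y)

/-- Fubini: the inequality on the sections is the hypothesis for the marginal integrals. -/
lemma prod {S : Type*} [Ring S] [PartialOrder S] [Module ℝ S] [MeasurableSpace S]
    [IsOrderedRing R] [IsOrderedRing S] {ν : Measure S} [SFinite ν]
    (hμ : StarPrekopaLeindler μ lam θ K) (hν : StarPrekopaLeindler ν lam θ L) (hL : L ≠ ∞) :
    StarPrekopaLeindler (μ.prod ν) lam θ (L * K) := by
  intro f g h mf mg mh hf hg hfgh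
  rw [lintegral_prod _ mf.aemeasurable, lintegral_prod _ mg.aemeasurable,
    lintegral_prod _ mh.aemeasurable]
  refine hμ.const_mul_le hL mf.lintegral_prod_right' mg.lintegral_prod_right'
    mh.lintegral_prod_right' (hf.lintegral_prodMk ν) (hg.lintegral_prodMk ν) fun x x' => ?_
  exact hν _ _ _ (mf.comp measurable_prodMk_left) (mg.comp measurable_prodMk_left)
    (mh.comp measurable_prodMk_left) (hf.comp_prodMk x) (hg.comp_prodMk x')
    fun y y' => hfgh (x, y) (x', y')

end StarPrekopaLeindler

lemma measurePreserving_fin_cons {n : ℕ} {α : Type*} [MeasurableSpace α]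
    (ν : Fin (n + 1) → Measure α) [∀ i, SigmaFinite (ν i)] :
    MeasurePreserving (fun p : α × (Fin n → α) => (Fin.cons p.1 p.2 : Fin (n + 1) → α))
      ((ν 0).prod (Measure.pi fun i => ν i.succ)) (Measure.pi ν) := by
  convert (measurePreserving_piFinSuccAbove ν 0).symm using 1
  · exact funext fun p => (Fin.insertNth_zero' p.1 p.2).symm
  · simp only [Fin.succAbove_zero]

lemma starPrekopaLeindler_pi {R : Type*} [Ring R] [PartialOrder R] [IsOrderedRing R] [Module ℝ R]
    [MeasurableSpace R] {lam θ : ℝ} {K : ℝ≥0∞} (hK : K ≠ ∞) {n : ℕ} (ν : Fin n → Measure R)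
    [∀ i, SigmaFinite (ν i)] (hν : ∀ i, StarPrekopaLeindler (ν i) lam θ K) :
    StarPrekopaLeindler (Measure.pi ν) lam θ (K ^ n) := by
  induction n with
  | zero =>
    intro f g h mf mg mh _ _ hfgh
    simp only [Measure.pi_of_empty ν 0, lintegral_dirac' _ mf, lintegral_dirac' _ mg,
      lintegral_dirac' _ mh, pow_zero, one_mul]
    simpa using hfgh 0 0
  | succ n ih =>
    intro f g h mf mg mh hf hg hfgh
    have hcons := measurePreserving_fin_cons ν
    rw [← hcons.lintegral_comp mf, ← hcons.lintegral_comp mg, ← hcons.lintegral_comp mh, pow_succ]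
    refine (hν 0).prod (ih (fun i => ν i.succ) fun i => hν i.succ) (ENNReal.pow_ne_top hK) _ _ _
      (mf.comp hcons.measurable) (mg.comp hcons.measurable) (mh.comp hcons.measurable)
      hf.comp_fin_cons hg.comp_fin_cons fun x y => ?_
    convert hfgh (Fin.cons x.1 x.2) (Fin.cons y.1 y.2) using 2
    ext i; refine Fin.cases ?_ (fun j => ?_) i <;> simp

lemma StarPrekopaLeindler.geom_mean_measure_le {R : Type*} [Ring R] [PartialOrder R]
    [IsOrderedRing R] [Module ℝ R] [MeasurableSpace R] {μ : Measure R} {lam θ : ℝ} {K : ℝ≥0∞}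
    (hμ : StarPrekopaLeindler μ lam θ K) (hθ : θ ∈ Ioo (0 : ℝ) 1) {A B C : Set R}
    (mA : MeasurableSet A) (mB : MeasurableSet B) (mC : MeasurableSet C)
    (hA : StarConvex R 0 A) (hB : StarConvex R 0 B) (hC : (1 - lam) • A + lam • B ⊆ C) :
    K * (μ A ^ (1 - θ) * μ B ^ θ) ≤ μ C := by
  have starDecreasing_one : StarDecreasing (1 : R → ℝ≥0∞) := fun _ _ _ => le_rfl
  rw [← lintegral_indicator_one mA, ← lintegral_indicator_one mB, ← lintegral_indicator_one mC]
  refine hμ _ _ _ (measurable_one.indicator mA) (measurable_one.indicator mB)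
    (measurable_one.indicator mC) (starDecreasing_one.indicator hA)
    (starDecreasing_one.indicator hB) fun x y => ?_
  by_cases hx : x ∈ A
  · by_cases hy : y ∈ B
    · simp [hx, hy, hC (add_mem_add (smul_mem_smul_set hx) (smul_mem_smul_set hy))]
    · simp [hy, hθ.1]
  · simp [hx, hθ.2]

lemma rpow_mul_rpow_le_ofReal_mul_add {θ : ℝ} (hθ : θ ∈ Ioo (0 : ℝ) 1) (X Y : ℝ≥0∞) :
    X ^ (1 - θ) * Y ^ θ ≤ ENNReal.ofReal (1 - θ) * X + ENNReal.ofReal θ * Y := by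
  have hθ' : 0 < 1 - θ := sub_pos.2 hθ.2
  have hpq : Real.HolderConjugate (1 - θ)⁻¹ θ⁻¹ :=
    Real.holderConjugate_iff.2 ⟨(one_lt_inv₀ hθ').2 (by linarith [hθ.1]), by simp⟩
  have hyoung := ENNReal.young_inequality (X ^ (1 - θ)) (Y ^ θ) hpq
  rwa [ENNReal.rpow_rpow_inv hθ'.ne', ENNReal.rpow_rpow_inv hθ.1.ne', ENNReal.ofReal_inv_of_pos hθ',
    ENNReal.ofReal_inv_of_pos hθ.1, div_eq_mul_inv, div_eq_mul_inv, inv_inv, inv_inv,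
    mul_comm X, mul_comm Y] at hyoung

lemma geom_mean_mul_geom_mean {θ : ℝ} (hθ : θ ∈ Icc (0 : ℝ) 1) (u v X Y : ℝ≥0∞) :
    u ^ (1 - θ) * v ^ θ * (X ^ (1 - θ) * Y ^ θ) = (u * X) ^ (1 - θ) * (v * Y) ^ θ := by
  rw [ENNReal.mul_rpow_of_nonneg _ _ (sub_nonneg.2 hθ.2), ENNReal.mul_rpow_of_nonneg _ _ hθ.1,
    mul_mul_mul_comm]

/-- In logarithmic coordinates the right side of the first claim is a convex function, and the left
side is its tangent plane at `(x, y)`, with slope `θ`. -/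
lemma exists_weight_mul_geom_mean_le_arith_mean {lam : ℝ} (hlam : lam ∈ Ioo (0 : ℝ) 1)
    {x y : ℝ≥0∞} (hx : x ≠ 0) (hy : y ≠ 0) (hx_top : x ≠ ∞) (hy_top : y ≠ ∞) :
    ∃ θ ∈ Ioo (0 : ℝ) 1, ∃ K : ℝ≥0∞,
      (∀ X Y : ℝ≥0∞,
        K * (X ^ (1 - θ) * Y ^ θ) ≤ ENNReal.ofReal (1 - lam) * X + ENNReal.ofReal lam * Y) ∧
      K * (x ^ (1 - θ) * y ^ θ) = ENNReal.ofReal (1 - lam) * x + ENNReal.ofReal lam * y := by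
  obtain ⟨a, ha, rfl⟩ : ∃ a : ℝ, 0 < a ∧ ENNReal.ofReal a = x :=
    ⟨x.toReal, ENNReal.toReal_pos hx hx_top, ENNReal.ofReal_toReal hx_top⟩
  obtain ⟨b, hb, rfl⟩ : ∃ b : ℝ, 0 < b ∧ ENNReal.ofReal b = y :=
    ⟨y.toReal, ENNReal.toReal_pos hy hy_top, ENNReal.ofReal_toReal hy_top⟩
  have hlam' : 0 < 1 - lam := sub_pos.2 hlam.2
  set m := (1 - lam) * a + lam * b with hm
  have hla : 0 < (1 - lam) * a := mul_pos hlam' ha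
  have hlb : 0 < lam * b := mul_pos hlam.1 hb
  have hm₀ : 0 < m := add_pos hla hlb
  set θ := lam * b / m with hθ_def
  have hθ : θ ∈ Ioo (0 : ℝ) 1 := ⟨div_pos hlb hm₀, (div_lt_one hm₀).2 (by linarith)⟩
  have hθ_a : (1 - θ) * (m / a) = 1 - lam := by
    rw [hθ_def]; field_simp; rw [hm]; ring
  have hθ_b : θ * (m / b) = lam := by
    rw [hθ_def]; field_simp
  refine ⟨θ, hθ, ENNReal.ofReal (m / a) ^ (1 - θ) * ENNReal.ofReal (m / b) ^ θ, fun X Y => ?_, ?_⟩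
  · rw [geom_mean_mul_geom_mean (Ioo_subset_Icc_self hθ)]
    refine (rpow_mul_rpow_le_ofReal_mul_add hθ _ _).trans_eq ?_
    rw [← mul_assoc, ← mul_assoc, ← ENNReal.ofReal_mul (sub_nonneg.2 hθ.2.le),
      ← ENNReal.ofReal_mul hθ.1.le, hθ_a, hθ_b]
  · rw [geom_mean_mul_geom_mean (Ioo_subset_Icc_self hθ), ← ENNReal.ofReal_mul (div_pos hm₀ ha).le,
      ← ENNReal.ofReal_mul (div_pos hm₀ hb).le, div_mul_cancel₀ _ ha.ne', div_mul_cancel₀ _ hb.ne',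
      ← ENNReal.rpow_add_of_nonneg _ _ (sub_nonneg.2 hθ.2.le) hθ.1.le, sub_add_cancel,
      ENNReal.rpow_one, hm, ENNReal.ofReal_add hla.le hlb.le, ENNReal.ofReal_mul hlam'.le,
      ENNReal.ofReal_mul hlam.1.le]

lemma lintegral_pi_prod_eq_prod_lintegral {α : Type*} [MeasurableSpace α] {n : ℕ}
    (ν : Fin n → Measure α) [∀ i, SigmaFinite (ν i)] {f : Fin n → α → ℝ≥0∞}
    (hf : ∀ i, Measurable (f i)) :
    ∫⁻ x, ∏ i, f i (x i) ∂Measure.pi ν = ∏ i, ∫⁻ t, f i t ∂ν i := by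
  induction n with
  | zero => simp [Measure.pi_of_empty ν]
  | succ n ih =>
    rw [← (measurePreserving_fin_cons ν).lintegral_comp (by fun_prop), Fin.prod_univ_succ,
      ← ih _ fun i => hf i.succ]
    simp only [Fin.prod_univ_succ, Fin.cons_zero, Fin.cons_succ]
    refine lintegral_prod_mul (g := fun y : Fin n → α => ∏ i : Fin n, f i.succ (y i))
      (hf 0).aemeasurable ?_
    exact (Finset.measurable_prod _ fun i _ =>
      (hf i.succ).comp (measurable_pi_apply i)).aemeasurable

lemma pi_withDensity_eq_withDensity_prod {α : Type*} [MeasurableSpace α] {n : ℕ}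
    (ν : Fin n → Measure α) [∀ i, SigmaFinite (ν i)] {f : Fin n → α → ℝ≥0∞}
    (hf : ∀ i, Measurable (f i)) [∀ i, SigmaFinite ((ν i).withDensity (f i))] :
    Measure.pi (fun i => (ν i).withDensity (f i)) =
      (Measure.pi ν).withDensity fun x => ∏ i, f i (x i) := by
  refine Measure.pi_eq fun s hs => ?_
  rw [withDensity_apply _ (MeasurableSet.univ_pi hs), Measure.restrict_pi_pi,
    lintegral_pi_prod_eq_prod_lintegral _ hf]
  simp only [withDensity_apply _ (hs _)]

lemma ofReal_pow_mul_withDensity_le_withDensity_smul {E : Type*} [NormedAddCommGroup E]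
    [NormedSpace ℝ E] [FiniteDimensional ℝ E] [MeasurableSpace E] [BorelSpace E] (μ : Measure E)
    [μ.IsAddHaarMeasure] {Φ : E → ℝ≥0∞} {c : ℝ} (hc : 0 < c) (hΦ : ∀ x, Φ x ≤ Φ (c • x)) {s : Set E}
    (hs : MeasurableSet s) :
    ENNReal.ofReal (c ^ Module.finrank ℝ E) * μ.withDensity Φ s ≤ μ.withDensity Φ (c • s) := by
  have hpow : 0 < c ^ Module.finrank ℝ E := pow_pos hc _
  have hμ : μ = ENNReal.ofReal (c ^ Module.finrank ℝ E) • Measure.map (c • ·) μ := by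
    rw [Measure.map_addHaar_smul μ hc.ne', abs_of_pos (inv_pos.2 hpow), smul_smul,
      ← ENNReal.ofReal_mul hpow.le, mul_inv_cancel₀ hpow.ne', ENNReal.ofReal_one, one_smul]
  have hchange : ∫⁻ x in c • s, Φ x ∂μ =
      ENNReal.ofReal (c ^ Module.finrank ℝ E) * ∫⁻ x in s, Φ (c • x) ∂μ := by
    have hemb := measurableEmbedding_const_smul₀ (α := E) hc.ne'
    conv_lhs => rw [hμ]
    rw [Measure.restrict_smul, lintegral_smul_measure, hemb.restrict_map, hemb.lintegral_map,
      show (c • ·) ⁻¹' (c • s) = s from preimage_image_eq s hemb.injective]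
    simp only [smul_eq_mul]
  rw [withDensity_apply _ hs, withDensity_apply _ (hs.const_smul₀ c), hchange]
  gcongr
  exact hΦ _

lemma starDecreasing_prod_apply {ι R : Type*} [Fintype ι] [MulZeroOneClass R] [Preorder R]
    {ψ : ι → R → ℝ≥0∞} (hψ : ∀ i, StarDecreasing (ψ i)) :
    StarDecreasing fun x : ι → R => ∏ i, ψ i (x i) :=
  fun x ε hε => Finset.prod_le_prod' fun i _ => hψ i (x i) (ε i) ⟨hε.1 i, hε.2 i⟩

lemma ofReal_pow_rpow_one_div {n : ℕ} (hn : n ≠ 0) {c : ℝ} (hc : 0 ≤ c) :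
    ENNReal.ofReal (c ^ n) ^ (1 / (n : ℝ)) = ENNReal.ofReal c := by
  rw [ENNReal.ofReal_pow hc, one_div, ENNReal.pow_rpow_inv_natCast hn]

/-- The product of the measures on `ℝ` with Lebesgue densities `ψ i`. -/
abbrev piWithDensity {n : ℕ} (ψ : Fin n → ℝ → ℝ≥0∞) : Measure (Fin n → ℝ) :=
  Measure.pi fun i => (volume : Measure ℝ).withDensity (ψ i)

section PiWithDensity

variable {n : ℕ} {ψ : Fin n → ℝ → ℝ≥0∞} [∀ i, SigmaFinite ((volume : Measure ℝ).withDensity (ψ i))]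
  {lam : ℝ} {A B C : Set (Fin n → ℝ)}

lemma piWithDensity_eq_volume_withDensity (hψ : ∀ i, StarDecreasing (ψ i)) :
    piWithDensity ψ = (volume : Measure (Fin n → ℝ)).withDensity fun x => ∏ i, ψ i (x i) := by
  rw [volume_pi, piWithDensity, pi_withDensity_eq_withDensity_prod _ fun i => (hψ i).measurable]

lemma ofReal_mul_piWithDensity_rpow_le (hn : n ≠ 0) (hψ : ∀ i, StarDecreasing (ψ i)) {c : ℝ}
    (hc : c ∈ Ioc (0 : ℝ) 1) (mA : MeasurableSet A) (hAC : c • A ⊆ C) :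
    ENNReal.ofReal c * piWithDensity ψ A ^ (1 / (n : ℝ)) ≤ piWithDensity ψ C ^ (1 / (n : ℝ)) := by
  have hscale := ofReal_pow_mul_withDensity_le_withDensity_smul volume hc.1
    (fun x => starDecreasing_prod_apply hψ x (fun _ => c) ⟨fun _ => hc.1.le, fun _ => hc.2⟩) mA
  rw [← piWithDensity_eq_volume_withDensity hψ, Module.finrank_fin_fun] at hscale
  have hroot := ENNReal.rpow_le_rpow (hscale.trans (measure_mono hAC))
    (one_div_nonneg.2 n.cast_nonneg)
  rwa [ENNReal.mul_rpow_of_nonneg _ _ (one_div_nonneg.2 n.cast_nonneg),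
    ofReal_pow_rpow_one_div hn hc.1.le] at hroot

lemma brunn_minkowski_piWithDensity_of_ne_zero_of_ne_top (hn : n ≠ 0)
    (hψ : ∀ i, StarDecreasing (ψ i)) (hlam : lam ∈ Ioo (0 : ℝ) 1)
    (mA : MeasurableSet A) (mB : MeasurableSet B) (mC : MeasurableSet C)
    (hA : StarConvex (Fin n → ℝ) 0 A) (hB : StarConvex (Fin n → ℝ) 0 B)
    (hC : (1 - lam) • A + lam • B ⊆ C)
    (hA₀ : piWithDensity ψ A ≠ 0) (hB₀ : piWithDensity ψ B ≠ 0)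
    (hA_top : piWithDensity ψ A ≠ ∞) (hB_top : piWithDensity ψ B ≠ ∞) :
    ENNReal.ofReal (1 - lam) * piWithDensity ψ A ^ (1 / (n : ℝ)) +
      ENNReal.ofReal lam * piWithDensity ψ B ^ (1 / (n : ℝ)) ≤
        piWithDensity ψ C ^ (1 / (n : ℝ)) := by
  have hn_inv : 0 ≤ 1 / (n : ℝ) := by positivity
  obtain ⟨θ, hθ, K, hK, hK_eq⟩ := exists_weight_mul_geom_mean_le_arith_mean hlam
    (ENNReal.rpow_pos (pos_iff_ne_zero.2 hA₀) hA_top).ne'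
    (ENNReal.rpow_pos (pos_iff_ne_zero.2 hB₀) hB_top).ne'
    (ENNReal.rpow_ne_top_of_nonneg hn_inv hA_top) (ENNReal.rpow_ne_top_of_nonneg hn_inv hB_top)
  have hK_top : K ≠ ∞ := by
    refine ne_top_of_le_ne_top ?_ (by simpa using hK 1 1)
    finiteness
  have hPL : StarPrekopaLeindler (piWithDensity ψ) lam θ (K ^ n) :=
    starPrekopaLeindler_pi hK_top _ fun i =>
      (starLinearBM_withDensity (Ioo_subset_Icc_self hlam) (hψ i)).starPrekopaLeindler hθ hK
  have rpow_comm : ∀ (u : ℝ≥0∞) (p q : ℝ), (u ^ p) ^ q = (u ^ q) ^ p := fun u p q => by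
    rw [← ENNReal.rpow_mul, ← ENNReal.rpow_mul, mul_comm]
  calc _ = (K ^ n * (piWithDensity ψ A ^ (1 - θ) * piWithDensity ψ B ^ θ)) ^ (1 / (n : ℝ)) := by
        rw [← hK_eq, ENNReal.mul_rpow_of_nonneg _ _ hn_inv, ENNReal.mul_rpow_of_nonneg _ _ hn_inv,
          rpow_comm _ (1 - θ), rpow_comm _ θ, one_div, ENNReal.pow_rpow_inv_natCast hn]
    _ ≤ piWithDensity ψ C ^ (1 / (n : ℝ)) :=
        ENNReal.rpow_le_rpow (hPL.geom_mean_measure_le hθ mA mB mC hA hB hC) hn_inv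

lemma brunn_minkowski_piWithDensity_of_measurableSet (hn : n ≠ 0) (hψ : ∀ i, StarDecreasing (ψ i))
    (hlam : lam ∈ Ioo (0 : ℝ) 1) (hA₀ : A.Nonempty) (hB₀ : B.Nonempty)
    (mA : MeasurableSet A) (mB : MeasurableSet B) (mC : MeasurableSet C)
    (hA : StarConvex (Fin n → ℝ) 0 A) (hB : StarConvex (Fin n → ℝ) 0 B)
    (hC : (1 - lam) • A + lam • B ⊆ C) :
    ENNReal.ofReal (1 - lam) * piWithDensity ψ A ^ (1 / (n : ℝ)) +
      ENNReal.ofReal lam * piWithDensity ψ B ^ (1 / (n : ℝ)) ≤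
        piWithDensity ψ C ^ (1 / (n : ℝ)) := by
  have hn_inv : 0 < 1 / (n : ℝ) := by positivity
  have hlam' : 0 < 1 - lam := sub_pos.2 hlam.2
  have left_le := ofReal_mul_piWithDensity_rpow_le hn hψ ⟨hlam', by linarith [hlam.1]⟩ mA
    ((subset_add_left _ (zero_mem_smul_set (hB.mem hB₀))).trans hC)
  have right_le := ofReal_mul_piWithDensity_rpow_le hn hψ ⟨hlam.1, hlam.2.le⟩ mB
    ((subset_add_right _ (zero_mem_smul_set (hA.mem hA₀))).trans hC)
  rcases eq_or_ne (piWithDensity ψ A) 0 with hμA | hμA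
  · simpa only [hμA, ENNReal.zero_rpow_of_pos hn_inv, mul_zero, zero_add] using right_le
  rcases eq_or_ne (piWithDensity ψ B) 0 with hμB | hμB
  · simpa only [hμB, ENNReal.zero_rpow_of_pos hn_inv, mul_zero, add_zero] using left_le
  rcases eq_or_ne (piWithDensity ψ A) ∞ with hA_top | hA_top
  · rw [hA_top, ENNReal.top_rpow_of_pos hn_inv, ENNReal.mul_top (ENNReal.ofReal_pos.2 hlam').ne',
      top_le_iff] at left_le
    exact left_le ▸ le_top
  rcases eq_or_ne (piWithDensity ψ B) ∞ with hB_top | hB_top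
  · rw [hB_top, ENNReal.top_rpow_of_pos hn_inv, ENNReal.mul_top (ENNReal.ofReal_pos.2 hlam.1).ne',
      top_le_iff] at right_le
    exact right_le ▸ le_top
  exact brunn_minkowski_piWithDensity_of_ne_zero_of_ne_top hn hψ hlam mA mB mC hA hB hC
    hμA hμB hA_top hB_top

lemma piWithDensity_closure (hψ : ∀ i, StarDecreasing (ψ i)) (hC : Convex ℝ C) :
    piWithDensity ψ (closure C) = piWithDensity ψ C := by
  have hfrontier : piWithDensity ψ (frontier C) = 0 := by
    rw [piWithDensity_eq_volume_withDensity hψ]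
    exact withDensity_absolutelyContinuous _ _ (hC.addHaar_frontier volume)
  rw [closure_eq_self_union_frontier]
  exact measure_congr (union_ae_eq_left_of_ae_eq_empty (ae_eq_empty.2 hfrontier))

theorem brunn_minkowski_piWithDensity (hn : n ≠ 0) (hψ : ∀ i, StarDecreasing (ψ i))
    (hlam : lam ∈ Ioo (0 : ℝ) 1) (hA₀ : A.Nonempty) (hB₀ : B.Nonempty)
    (hA : StarConvex (Fin n → ℝ) 0 A) (hB : StarConvex (Fin n → ℝ) 0 B)
    (hAc : Convex ℝ A) (hBc : Convex ℝ B) :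
    ENNReal.ofReal (1 - lam) * piWithDensity ψ A ^ (1 / (n : ℝ)) +
      ENNReal.ofReal lam * piWithDensity ψ B ^ (1 / (n : ℝ)) ≤
        piWithDensity ψ ((1 - lam) • A + lam • B) ^ (1 / (n : ℝ)) := by
  have starConvex_closure : ∀ {S : Set (Fin n → ℝ)}, StarConvex (Fin n → ℝ) 0 S →
      StarConvex (Fin n → ℝ) 0 (closure S) := fun hS =>
    starConvex_zero_iff.2 fun x hx ε hε₀ hε₁ =>
      map_mem_closure (continuous_const_mul ε) hx fun y hy => hS.smul_mem hy hε₀ hε₁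
  rw [← piWithDensity_closure hψ hAc, ← piWithDensity_closure hψ hBc,
    ← piWithDensity_closure hψ ((hAc.smul _).add (hBc.smul _))]
  refine brunn_minkowski_piWithDensity_of_measurableSet hn hψ hlam hA₀.closure hB₀.closure
    isClosed_closure.measurableSet isClosed_closure.measurableSet isClosed_closure.measurableSet
    (starConvex_closure hA) (starConvex_closure hB) ?_
  rintro _ ⟨_, ⟨x, hx, rfl⟩, _, ⟨y, hy, rfl⟩, rfl⟩
  exact map_mem_closure₂ (f := fun x y : Fin n → ℝ => (1 - lam) • x + lam • y) (by fun_prop) hx hy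
    fun a ha b hb => add_mem_add (smul_mem_smul_set ha) (smul_mem_smul_set hb)

end PiWithDensity

lemma PositivelyDecreasing.starDecreasing_ofReal {φ : ℝ → ℝ} (hφ : PositivelyDecreasing φ) :
    StarDecreasing fun x => ENNReal.ofReal (φ x) := by
  intro x ε hε
  refine ENNReal.ofReal_le_ofReal ?_
  rcases le_total 0 x with hx | hx
  · exact hφ.1 _ _ (mul_nonneg hε.1 hx) (mul_le_of_le_one_left hx hε.2)
  · simpa using hφ.2 (ε * -x) (-x) (mul_nonneg hε.1 (neg_nonneg.2 hx))
      (mul_le_of_le_one_left (neg_nonneg.2 hx) hε.2)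

lemma WeaklyUnconditional.starConvex {n : ℕ} {A : Set (Fin n → ℝ)} (hA : WeaklyUnconditional A)
    (hAc : Convex ℝ A) : StarConvex (Fin n → ℝ) 0 A := by
  refine starConvex_zero_iff.2 fun x hx ε hε₀ hε₁ => ?_
  have hvertices : univ.pi (fun _ : Fin n => ({0, 1} : Set ℝ)) ⊆ LinearMap.mulRight ℝ x ⁻¹' A :=
    fun e he => hA x hx e fun i => by simpa using he i (mem_univ i)
  -- `[0, 1]ⁿ` is the convex hull of `{0, 1}ⁿ`.
  have hcube := convexHull_min hvertices (hAc.linear_preimage _)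
  rw [convexHull_pi] at hcube
  refine hcube fun i _ => ?_
  rw [convexHull_pair, segment_eq_Icc zero_le_one]
  exact ⟨hε₀ i, hε₁ i⟩

lemma starConvex_real_smul {R : Type*} [Ring R] [PartialOrder R] [IsOrderedRing R] [Algebra ℝ R]
    {A : Set R} (hA : StarConvex R 0 A) (t : ℝ) : StarConvex R 0 (t • A) := by
  refine starConvex_zero_iff.2 ?_
  rintro _ ⟨x, hx, rfl⟩ ε hε₀ hε₁
  exact ⟨ε * x, hA.smul_mem hx hε₀ hε₁, (mul_smul_comm t ε x).symm⟩

section ConvexCombination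

variable {E : Type*} [AddCommGroup E] [Module ℝ E] {A B : Set E} {lam t s : ℝ}

lemma convexCombination_smul (hA : Convex ℝ A) (hlam : lam ∈ Icc (0 : ℝ) 1) (ht : 0 ≤ t)
    (hs : 0 ≤ s) : (1 - lam) • t • A + lam • s • A = ((1 - lam) * t + lam * s) • A := by
  rw [hA.add_smul (mul_nonneg (sub_nonneg.2 hlam.2) ht) (mul_nonneg hlam.1 hs), mul_smul, mul_smul]

lemma convexCombination_add_smul (hA : Convex ℝ A) (hB : Convex ℝ B) (hlam : lam ∈ Icc (0 : ℝ) 1)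
    (ht : 0 ≤ t) (hs : 0 ≤ s) :
    (1 - lam) • (A + t • B) + lam • (A + s • B) = A + ((1 - lam) * t + lam * s) • B := by
  have hA_self : (1 - lam) • A + lam • A = A := by
    simpa using convexCombination_smul hA hlam zero_le_one zero_le_one
  rw [smul_add, smul_add, add_add_add_comm, hA_self, convexCombination_smul hB hlam ht hs]

end ConvexCombination

/-- Corollary `c:1/n-concavity`: for a product of measures with
positively decreasing densities and weakly unconditional convex sets `A, B`, the functions
`t ↦ μ(A+tB)^{1/n}` and `t ↦ μ(tA)^{1/n}` are concave on `[0,∞)`. -/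
theorem statement12 {n : ℕ} (hn : 0 < n) (φ : Fin n → ℝ → ℝ)
    (hφ0 : ∀ i x, 0 ≤ φ i x) (hφmeas : ∀ i, Measurable (φ i))
    (hφdec : ∀ i, PositivelyDecreasing (φ i))
    (μ : Measure (Fin n → ℝ))
    (hμ : μ = Measure.pi fun i => (volume : Measure ℝ).withDensity
      fun x => ENNReal.ofReal (φ i x))
    (A B : Set (Fin n → ℝ)) (hA : A.Nonempty) (hB : B.Nonempty)
    (hAw : WeaklyUnconditional A) (hBw : WeaklyUnconditional B)
    (hAc : Convex ℝ A) (hBc : Convex ℝ B) :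
    (∀ t s lam : ℝ, 0 ≤ t → 0 ≤ s → lam ∈ Ioo (0:ℝ) 1 →
      ENNReal.ofReal (1 - lam) * μ (A + t • B) ^ (1/(n:ℝ))
        + ENNReal.ofReal lam * μ (A + s • B) ^ (1/(n:ℝ))
        ≤ μ (A + ((1 - lam) * t + lam * s) • B) ^ (1/(n:ℝ))) ∧
    (∀ t s lam : ℝ, 0 ≤ t → 0 ≤ s → lam ∈ Ioo (0:ℝ) 1 →
      ENNReal.ofReal (1 - lam) * μ (t • A) ^ (1/(n:ℝ))
        + ENNReal.ofReal lam * μ (s • A) ^ (1/(n:ℝ))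
        ≤ μ (((1 - lam) * t + lam * s) • A) ^ (1/(n:ℝ))) := by
  subst hμ
  have hψ : ∀ i, StarDecreasing fun x => ENNReal.ofReal (φ i x) :=
    fun i => (hφdec i).starDecreasing_ofReal
  have hAs : StarConvex (Fin n → ℝ) 0 A := hAw.starConvex hAc
  have hBs : StarConvex (Fin n → ℝ) 0 B := hBw.starConvex hBc
  have hsum : ∀ t : ℝ, StarConvex (Fin n → ℝ) 0 (A + t • B) := fun t => by
    simpa only [add_zero] using hAs.add (starConvex_real_smul hBs t)
  constructor
  · intro t s lam ht hs hlam
    rw [← convexCombination_add_smul hAc hBc (Ioo_subset_Icc_self hlam) ht hs]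
    exact brunn_minkowski_piWithDensity hn.ne' hψ hlam (hA.add hB.smul_set) (hA.add hB.smul_set)
      (hsum t) (hsum s) (hAc.add (hBc.smul t)) (hAc.add (hBc.smul s))
  · intro t s lam ht hs hlam
    rw [← convexCombination_smul hAc (Ioo_subset_Icc_self hlam) ht hs]
    exact brunn_minkowski_piWithDensity hn.ne' hψ hlam hA.smul_set hA.smul_set
      (starConvex_real_smul hAs t) (starConvex_real_smul hAs s) (hAc.smul t) (hAc.smul s)

end
end
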